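/- arXiv:1611.02249 — 11 statements merged into one kernel-verified Lean document; each statement's English description precedes it below -/
import Mathlib

section
/- Let U, P, L be the parsimonious relations on the 28-element set H of major, minor, and augmented triads. Then, in the monoid of binary relations on H under relational composition, U ∘ U ∘ U = U. -/
/-- The 28-element set of the 24 major and minor triads and the 4 augmented triads:
`Sum.inl n` is the major triad `n_M`, `Sum.inr (Sum.inl n)` is the minor triad `n_m`,
and `Sum.inr (Sum.inr k)` is the augmented triad `k_aug`. -/
abbrev Htriads : Type := (ZMod 12) ⊕ (ZMod 12) ⊕ (ZMod 4)

/-- Binary relations on `Htriads`. -/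
abbrev MRel : Type := Htriads → Htriads → Prop

/-- The monoid of binary relations on `Htriads`: `r * s` relates `x` to `z` iff there is `y`
with `x r y` and `y s z` (i.e. first apply `r`, then `s`), and `1` is the equality relation. -/
instance : Monoid MRel where
  one := fun x y => x = y
  mul := fun r s => fun x z => ∃ y, r x y ∧ s y z
  mul_assoc r s t := by
    funext x z
    apply propext
    constructor
    · rintro ⟨y, ⟨w, hw1, hw2⟩, hy⟩
      exact ⟨w, hw1, y, hw2, hy⟩
    · rintro ⟨w, hw1, y, hy1, hy2⟩
      exact ⟨y, ⟨w, hw1, hy1⟩, hy2⟩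
  one_mul r := by
    funext x z
    apply propext
    constructor
    · rintro ⟨y, rfl, h⟩
      exact h
    · intro h
      exact ⟨x, rfl, h⟩
  mul_one r := by
    funext x z
    apply propext
    constructor
    · rintro ⟨y, h, rfl⟩
      exact h
    · intro h
      exact ⟨z, h, rfl⟩

/-- The major triad on root `n`. -/
def maj (n : ZMod 12) : Htriads := Sum.inl n
/-- The minor triad on root `n`. -/
def mino (n : ZMod 12) : Htriads := Sum.inr (Sum.inl n)
/-- The augmented triad `k_aug`, `k ∈ ℤ/4`. -/
def aug (k : ZMod 4) : Htriads := Sum.inr (Sum.inr k)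

/-- Reduction mod 4 of a pitch class mod 12. -/
def m4 (n : ZMod 12) : ZMod 4 := ZMod.castHom (show (4:ℕ) ∣ 12 by norm_num) (ZMod 4) n

/-- The relation `𝒰`: the symmetric relation relating exactly `n_M` with `(n mod 4)_aug`
and `n_m` with `((n+3) mod 4)_aug`. -/
def Urel : MRel := fun x y =>
  (∃ n : ZMod 12, x = maj n ∧ y = aug (m4 n)) ∨
  (∃ n : ZMod 12, x = aug (m4 n) ∧ y = maj n) ∨
  (∃ n : ZMod 12, x = mino n ∧ y = aug (m4 (n + 3))) ∨
  (∃ n : ZMod 12, x = aug (m4 (n + 3)) ∧ y = mino n)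

/-- The relation `𝒫`: the symmetric relation relating exactly `n_M` with `n_m`,
and each augmented triad with itself. -/
def Prel : MRel := fun x y =>
  (∃ n : ZMod 12, x = maj n ∧ y = mino n) ∨
  (∃ n : ZMod 12, x = mino n ∧ y = maj n) ∨
  (∃ k : ZMod 4, x = aug k ∧ y = aug k)

/-- The relation `ℒ`: the symmetric relation relating exactly `n_M` with `(n+4)_m`,
and each augmented triad with itself. -/
def Lrel : MRel := fun x y =>
  (∃ n : ZMod 12, x = maj n ∧ y = mino (n + 4)) ∨
  (∃ n : ZMod 12, x = mino (n + 4) ∧ y = maj n) ∨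
  (∃ k : ZMod 4, x = aug k ∧ y = aug k)

/-- Douthett's parsimonious relation `𝒮 = P_{1,0}` on major, minor and augmented triads. -/
def Srel : MRel := fun x y =>
  (∃ n : ZMod 12, x = maj n ∧ y = mino n) ∨
  (∃ n : ZMod 12, x = mino n ∧ y = maj n) ∨
  (∃ n : ZMod 12, x = maj n ∧ y = mino (n + 4)) ∨
  (∃ n : ZMod 12, x = mino (n + 4) ∧ y = maj n) ∨
  (∃ n : ZMod 12, x = maj n ∧ y = aug (m4 n)) ∨
  (∃ n : ZMod 12, x = aug (m4 n) ∧ y = maj n) ∨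
  (∃ n : ZMod 12, x = mino n ∧ y = aug (m4 (n + 3))) ∨
  (∃ n : ZMod 12, x = aug (m4 (n + 3)) ∧ y = mino n)

/-- Douthett's parsimonious relation `𝒯 = P_{2,0}` on major, minor and augmented triads. -/
def Trel : MRel := fun x y =>
  (∃ n : ZMod 12, x = maj n ∧ y = maj (n + 4)) ∨
  (∃ n : ZMod 12, x = maj n ∧ y = maj (n + 8)) ∨
  (∃ n : ZMod 12, x = maj n ∧ y = mino (n + 1)) ∨
  (∃ n : ZMod 12, x = mino (n + 1) ∧ y = maj n) ∨
  (∃ n : ZMod 12, x = maj n ∧ y = mino (n + 5)) ∨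
  (∃ n : ZMod 12, x = mino (n + 5) ∧ y = maj n) ∨
  (∃ n : ZMod 12, x = maj n ∧ y = aug (m4 (n + 3))) ∨
  (∃ n : ZMod 12, x = aug (m4 (n + 3)) ∧ y = maj n) ∨
  (∃ n : ZMod 12, x = mino n ∧ y = mino (n + 4)) ∨
  (∃ n : ZMod 12, x = mino n ∧ y = mino (n + 8)) ∨
  (∃ n : ZMod 12, x = mino n ∧ y = aug (m4 n)) ∨
  (∃ n : ZMod 12, x = aug (m4 n) ∧ y = mino n)

/-- The augmented class attached to a triad. -/
def augClass : Htriads → ZMod 4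
  | Sum.inl n => m4 n
  | Sum.inr (Sum.inl n) => m4 (n + 3)
  | Sum.inr (Sum.inr k) => k

/-- Whether a triad is augmented. -/
def isAug : Htriads → Bool
  | Sum.inl _ => false
  | Sum.inr (Sum.inl _) => false
  | Sum.inr (Sum.inr _) => true

theorem Urel_iff (x y : Htriads) : Urel x y ↔ augClass x = augClass y ∧ isAug x ≠ isAug y := by
  rcases x with n | n | k <;> rcases y with m | m | l <;>
    simp [Urel, maj, mino, aug, augClass, isAug, eq_comm]

/-- In the monoid of binary relations on `Htriads`, `U ∘ U ∘ U = U`. -/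
theorem stmt0 : Urel * Urel * Urel = Urel := by
  funext x z
  apply propext
  change (∃ y, (∃ w, Urel x w ∧ Urel w y) ∧ Urel y z) ↔ Urel x z
  constructor
  · rintro ⟨y, ⟨w, h1, h2⟩, h3⟩
    rw [Urel_iff] at *
    refine ⟨h1.1.trans (h2.1.trans h3.1), ?_⟩
    have a := h1.2
    have b := h2.2
    have c := h3.2
    revert a b c
    generalize isAug x = p, isAug w = q, isAug y = r, isAug z = s
    revert p q r s
    decide
  · intro h
    have h' : Urel z x := by
      rw [Urel_iff] at *
      exact ⟨h.1.symm, h.2.symm⟩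
    exact ⟨x, ⟨z, h, h'⟩, h⟩
end

section
/- Let P and L be the parsimonious relations on the 28-element set H of major, minor, and augmented triads. In the monoid of binary relations on H under relational composition, L ∘ P ∘ L = P ∘ L ∘ P. -/
def fP : Htriads → Htriads
  | Sum.inl n => mino n
  | Sum.inr (Sum.inl n) => maj n
  | Sum.inr (Sum.inr k) => aug k

def fL : Htriads → Htriads
  | Sum.inl n => mino (n + 4)
  | Sum.inr (Sum.inl n) => maj (n - 4)
  | Sum.inr (Sum.inr k) => aug k

theorem Prel_iff (x y : Htriads) : Prel x y ↔ y = fP x := by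
  rcases x with n | n | n <;> simp [Prel, fP, maj, mino, aug]

theorem Lrel_iff (x y : Htriads) : Lrel x y ↔ y = fL x := by
  rcases x with n | n | n <;> simp [Lrel, fL, maj, mino, aug]
  constructor
  · rintro ⟨m, rfl, rfl⟩
    simp
  · rintro rfl
    exact ⟨n - 4, by simp, rfl⟩

theorem mul_iff (r s : MRel) (x z : Htriads) : (r * s) x z ↔ ∃ y, r x y ∧ s y z := Iff.rfl

theorem f_braid (x : Htriads) : fL (fP (fL x)) = fP (fL (fP x)) := by
  rcases x with n | n | n
  · simp only [fL, fP, maj, mino]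
    congr 2
    revert n; decide
  · simp only [fL, fP, maj, mino]
    congr 1
    revert n; decide
  · rfl

/-- `L ∘ P ∘ L = P ∘ L ∘ P`. -/
theorem stmt2 : Lrel * Prel * Lrel = Prel * Lrel * Prel := by
  funext x z
  apply propext
  simp only [mul_iff, Prel_iff, Lrel_iff, exists_eq_left, f_braid]
end

section
/- Let U, P, L be the parsimonious relations on the 28-element set H of major, minor, and augmented triads. In the monoid of binary relations on H under relational composition, the compositions U·P = U·L and P·U = L·U (where R·R' denotes the composite relation first applying R then R', i.e. the monoid product corresponding to the word read left to right). -/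
theorem m4_add4 (n : ZMod 12) : m4 (n + 4) = m4 n := by revert n; decide
theorem m4_add43 (n : ZMod 12) : m4 (n + 4 + 3) = m4 (n + 3) := by revert n; decide

theorem Urel_symm (x y : Htriads) : Urel x y ↔ Urel y x := by
  unfold Urel; grind
theorem Prel_symm (x y : Htriads) : Prel x y ↔ Prel y x := by
  unfold Prel; grind
theorem Lrel_symm (x y : Htriads) : Lrel x y ↔ Lrel y x := by
  unfold Lrel; grind

theorem U_maj (x : Htriads) (n : ZMod 12) : Urel x (maj n) ↔ x = aug (m4 n) := by
  simp [Urel, maj, mino, aug]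
theorem U_mino (x : Htriads) (n : ZMod 12) : Urel x (mino n) ↔ x = aug (m4 (n + 3)) := by
  simp [Urel, maj, mino, aug]

theorem UP_eq_UL (x z : Htriads) : (Urel * Prel) x z ↔ (Urel * Lrel) x z := by
  rw [mul_iff, mul_iff]
  constructor
  · rintro ⟨y, hu, ⟨n, rfl, rfl⟩ | ⟨n, rfl, rfl⟩ | ⟨k, rfl, rfl⟩⟩
    · refine ⟨maj (n - 4), ?_, Or.inl ⟨n - 4, rfl, by rw [sub_add_cancel]⟩⟩
      rw [U_maj] at hu ⊢
      rw [hu, ← m4_add4 (n - 4), sub_add_cancel]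
    · refine ⟨mino (n + 4), ?_, Or.inr (Or.inl ⟨n, rfl, rfl⟩)⟩
      rw [U_mino] at hu ⊢
      rw [hu, m4_add43]
    · exact ⟨aug k, hu, Or.inr (Or.inr ⟨k, rfl, rfl⟩)⟩
  · rintro ⟨y, hu, ⟨n, rfl, rfl⟩ | ⟨n, rfl, rfl⟩ | ⟨k, rfl, rfl⟩⟩
    · refine ⟨maj (n + 4), ?_, Or.inl ⟨n + 4, rfl, rfl⟩⟩
      rw [U_maj] at hu ⊢
      rw [hu, m4_add4]
    · refine ⟨mino n, ?_, Or.inr (Or.inl ⟨n, rfl, rfl⟩)⟩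
      rw [U_mino] at hu ⊢
      rw [hu, m4_add43]
    · exact ⟨aug k, hu, Or.inr (Or.inr ⟨k, rfl, rfl⟩)⟩

/-- `U·P = U·L` and `P·U = L·U`, where `·` is the monoid product
(first apply the left relation, then the right one). -/
theorem stmt3 : Urel * Prel = Urel * Lrel ∧ Prel * Urel = Lrel * Urel := by
  refine ⟨funext fun x => funext fun z => propext (UP_eq_UL x z),
    funext fun x => funext fun z => propext ?_⟩
  have h := UP_eq_UL z x
  rw [mul_iff, mul_iff] at h ⊢
  constructor
  · rintro ⟨y, h1, h2⟩
    obtain ⟨w, h3, h4⟩ := h.1 ⟨y, (Urel_symm _ _).1 h2, (Prel_symm _ _).1 h1⟩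
    exact ⟨w, (Lrel_symm _ _).1 h4, (Urel_symm _ _).1 h3⟩
  · rintro ⟨y, h1, h2⟩
    obtain ⟨w, h3, h4⟩ := h.2 ⟨y, (Urel_symm _ _).1 h2, (Lrel_symm _ _).1 h1⟩
    exact ⟨w, (Prel_symm _ _).1 h4, (Urel_symm _ _).1 h3⟩
end

section
/- Let U, P, L be the parsimonious relations on the 28-element set H of major, minor, and augmented triads. The submonoid M_UPL of the monoid of binary relations on H generated by {U, P, L} contains exactly 40 elements. -/
def gList : Fin 3 → List (List ℕ)
  | 0 => [[24], [25], [26], [27], [24], [25], [26], [27], [24], [25], [26], [27], [27], [24], [25], [26], [27], [24], [25], [26], [27], [24], [25], [26], [0, 4, 8, 13, 17, 21], [1, 5, 9, 14, 18, 22], [2, 6, 10, 15, 19, 23], [3, 7, 11, 12, 16, 20]]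
  | 1 => [[12], [13], [14], [15], [16], [17], [18], [19], [20], [21], [22], [23], [0], [1], [2], [3], [4], [5], [6], [7], [8], [9], [10], [11], [24], [25], [26], [27]]
  | 2 => [[16], [17], [18], [19], [20], [21], [22], [23], [12], [13], [14], [15], [8], [9], [10], [11], [0], [1], [2], [3], [4], [5], [6], [7], [24], [25], [26], [27]]

def wordsL : List (List (Fin 3)) :=
  [[], [0], [1], [2], [0, 0], [1, 0], [0, 1], [2, 1], [1, 2], [1, 0, 0], [0, 1, 0], [0, 0, 1], [1, 0, 1], [1, 2, 1], [0, 1, 0, 0], [0, 0, 1, 0], [1, 0, 1, 0], [1, 0, 0, 1], [0, 1, 0, 1], [0, 0, 1, 0, 0], [1, 0, 1, 0, 0], [1, 0, 0, 1, 0], [0, 1, 0, 1, 0], [0, 1, 0, 0, 1], [0, 0, 1, 0, 1], [1, 0, 1, 0, 1], [1, 0, 0, 1, 0, 0], [0, 1, 0, 1, 0, 0], [0, 1, 0, 0, 1, 0], [1, 0, 1, 0, 1, 0], [1, 0, 1, 0, 0, 1], [1, 0, 0, 1, 0, 1], [0, 1, 0, 1, 0, 1], [1, 0, 1, 0, 1,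 0, 0], [1, 0, 1, 0, 0, 1, 0], [0, 1, 0, 1, 0, 1, 0], [0, 1, 0, 0, 1, 0, 1], [1, 0, 1, 0, 1, 0, 1], [1, 0, 1, 0, 1, 0, 1, 0], [1, 0, 1, 0, 0, 1, 0, 1]]

def gRel : Fin 3 → MRel
  | 0 => Urel
  | 1 => Prel
  | 2 => Lrel

def idx : Htriads → ℕ
  | Sum.inl n => n.val
  | Sum.inr (Sum.inl n) => 12 + n.val
  | Sum.inr (Sum.inr k) => 24 + k.val

def unidx (i : ℕ) : Htriads :=
  if i < 12 then Sum.inl (i : ZMod 12)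
  else if i < 24 then Sum.inr (Sum.inl ((i - 12 : ℕ) : ZMod 12))
  else Sum.inr (Sum.inr ((i - 24 : ℕ) : ZMod 4))

lemma idx_unidx : ∀ i < 28, idx (unidx i) = i := by decide +kernel

lemma unidx_idx : ∀ x, unidx (idx x) = x := by decide +kernel

lemma idx_lt : ∀ x, idx x < 28 := by decide +kernel

def toRel (A : List ℕ) : MRel := fun x y => (A.getD (idx x) 0).testBit (idx y) = true

def orL (A : List ℕ) (l : List ℕ) : ℕ := l.foldr (fun i acc => A.getD i 0 ||| acc) 0

def lmulL (G : List (List ℕ)) (A : List ℕ) : List ℕ := G.map (orL A)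

def evL : List (Fin 3) → List ℕ
  | [] => (List.range 28).map (fun i => 2 ^ i)
  | g :: w => lmulL (gList g) (evL w)

lemma testBit_orL (A l : List ℕ) (j : ℕ) :
    (orL A l).testBit j = true ↔ ∃ i ∈ l, (A.getD i 0).testBit j = true := by
  induction l with
  | nil => simp [orL]
  | cons a t ih =>
    have h : orL A (a :: t) = A.getD a 0 ||| orL A t := rfl
    rw [h, Nat.testBit_or, Bool.or_eq_true, ih]
    simp

lemma gList_lt : ∀ g : Fin 3, ∀ l ∈ gList g, ∀ i ∈ l, i < 28 := by decide +kernel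

lemma gList_len : ∀ g : Fin 3, (gList g).length = 28 := by decide +kernel

set_option synthInstance.maxHeartbeats 400000 in
set_option synthInstance.maxSize 2000 in
instance decU (x y : Htriads) : Decidable (Urel x y) :=
  inferInstanceAs (Decidable (_ ∨ _ ∨ _ ∨ _))

lemma gU_iff : ∀ x y, Urel x y ↔ idx y ∈ (gList 0).getD (idx x) [] := by
  decide +kernel

lemma gP_iff : ∀ x y, Prel x y ↔ idx y ∈ (gList 1).getD (idx x) [] := by
  unfold Prel
  decide +kernel

lemma gL_iff : ∀ x y, Lrel x y ↔ idx y ∈ (gList 2).getD (idx x) [] := by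
  unfold Lrel
  decide +kernel

lemma gRel_iff (g : Fin 3) (x y) : gRel g x y ↔ idx y ∈ (gList g).getD (idx x) [] := by
  fin_cases g
  · exact gU_iff x y
  · exact gP_iff x y
  · exact gL_iff x y

lemma toRel_lmul (g : Fin 3) (A : List ℕ) : toRel (lmulL (gList g) A) = gRel g * toRel A := by
  funext x z
  apply propext
  change _ ↔ ∃ y, gRel g x y ∧ toRel A y z
  have hx : idx x < (gList g).length := by rw [gList_len]; exact idx_lt x
  have h1 : (lmulL (gList g) A).getD (idx x) 0 = orL A ((gList g).getD (idx x) []) := by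
    simp [lmulL, List.getD, hx]
  unfold toRel
  rw [h1, testBit_orL]
  constructor
  · rintro ⟨i, hi, hb⟩
    have hi28 : i < 28 := by
      refine gList_lt g _ ?_ i hi
      simp [List.getD, hx]
    refine ⟨unidx i, ?_, ?_⟩
    · rw [gRel_iff, idx_unidx i hi28]; exact hi
    · rw [idx_unidx i hi28]; exact hb
  · rintro ⟨y, hy, hb⟩
    exact ⟨idx y, (gRel_iff g x y).1 hy, hb⟩

lemma toRel_nil : toRel (evL []) = 1 := by
  funext x z
  apply propext
  change _ ↔ x = z
  have hx := idx_lt x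
  have : (evL []).getD (idx x) 0 = 2 ^ idx x := by
    simp [evL, List.getD, hx]
  unfold toRel
  rw [this, Nat.testBit_two_pow]
  constructor
  · intro h
    have h := of_decide_eq_true h
    rw [← unidx_idx x, h, unidx_idx]
  · rintro rfl
    simp

def good (A : List ℕ) : Prop := A.length = 28 ∧ ∀ a ∈ A, a < 2 ^ 28

instance (A : List ℕ) : Decidable (good A) := by unfold good; infer_instance

def elems : List (List ℕ) := wordsL.map evL

lemma elems_good : ∀ A ∈ elems, good A := by decide +kernel

lemma elems_nodup : elems.Nodup := by decide +kernel

lemma elems_len : elems.length = 40 := by decide +kernel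

lemma elems_closed : ∀ g : Fin 3, ∀ A ∈ elems, lmulL (gList g) A ∈ elems := by decide +kernel

lemma elems_one : evL [] ∈ elems := by decide +kernel

lemma toRel_inj (A B : List ℕ) (hA : good A) (hB : good B) (h : toRel A = toRel B) : A = B := by
  apply List.ext_getElem (hA.1.trans hB.1.symm)
  intro i h1 h2
  apply Nat.eq_of_testBit_eq
  intro j
  have hi : i < 28 := hA.1 ▸ h1
  by_cases hj : j < 28
  · have h3 := congrFun (congrFun h (unidx i)) (unidx j)
    unfold toRel at h3
    rw [idx_unidx i hi, idx_unidx j hj] at h3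
    simp only [List.getD, List.getElem?_eq_getElem h1, List.getElem?_eq_getElem h2,
      Option.getD_some] at h3
    exact Bool.eq_iff_iff.2 (iff_of_eq h3)
  · have hp : 2 ^ 28 ≤ 2 ^ j := Nat.pow_le_pow_right (by norm_num) (not_lt.1 hj)
    rw [Nat.testBit_lt_two_pow ((hA.2 _ (List.getElem_mem h1)).trans_le hp),
      Nat.testBit_lt_two_pow ((hB.2 _ (List.getElem_mem h2)).trans_le hp)]

lemma gRel_mem (g : Fin 3) : gRel g ∈ Submonoid.closure ({Urel, Prel, Lrel} : Set MRel) := by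
  apply Submonoid.subset_closure
  fin_cases g <;> simp [gRel]

lemma ev_mem (w : List (Fin 3)) :
    toRel (evL w) ∈ Submonoid.closure ({Urel, Prel, Lrel} : Set MRel) := by
  induction w with
  | nil => rw [toRel_nil]; exact one_mem _
  | cons g w ih =>
    change toRel (lmulL (gList g) (evL w)) ∈ _
    rw [toRel_lmul]
    exact mul_mem (gRel_mem g) ih

lemma closure_eq : (Submonoid.closure ({Urel, Prel, Lrel} : Set MRel) : Set MRel)
    = toRel '' {A | A ∈ elems} := by
  apply Set.Subset.antisymm
  · intro r hr
    induction hr using Submonoid.closure_induction_left with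
    | one => exact ⟨_, elems_one, toRel_nil⟩
    | mul_left x hx y hy ih =>
      obtain ⟨A, hA, rfl⟩ := ih
      obtain ⟨g, rfl⟩ : ∃ g, gRel g = x := by
        rcases hx with rfl | rfl | rfl
        · exact ⟨0, rfl⟩
        · exact ⟨1, rfl⟩
        · exact ⟨2, rfl⟩
      exact ⟨_, elems_closed g A hA, toRel_lmul g A⟩
  · rintro _ ⟨A, hA, rfl⟩
    obtain ⟨w, -, rfl⟩ := List.mem_map.1 hA
    exact ev_mem w

/-- the submonoid of relations on `Htriads` generated by `{U, P, L}`
contains exactly 40 elements. -/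
theorem stmt6 : Nat.card (Submonoid.closure ({Urel, Prel, Lrel} : Set MRel)) = 40 := by
  change Nat.card ((Submonoid.closure ({Urel, Prel, Lrel} : Set MRel) : Set MRel)) = 40
  have hinj : Set.InjOn toRel {A | A ∈ elems} :=
    fun A hA B hB h => toRel_inj A B (elems_good A hA) (elems_good B hB) h
  rw [closure_eq, Nat.card_coe_set_eq, hinj.ncard_image]
  have : {A | A ∈ elems} = ((elems.toFinset : Finset (List ℕ)) : Set (List ℕ)) := by
    ext A; simp
  rw [this, Set.ncard_coe_finset, List.toFinset_card_of_nodup elems_nodup, elems_len]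
end

section
/- Let M_UPL be the submonoid of binary relations on the 28-element set H of major, minor, and augmented triads generated by the parsimonious relations U, P, L. The group of monoid automorphisms of M_UPL is isomorphic to the direct product of the dihedral group of order 6 with the cyclic group of order 2, i.e. Aut(M_UPL) ≅ DihedralGroup 3 × ℤ/2. -/
namespace UPL

def ix : Htriads → ℕ
  | Sum.inl n => n.val
  | Sum.inr (Sum.inl n) => 12 + n.val
  | Sum.inr (Sum.inr k) => 24 + k.val

lemma ix_lt : ∀ x, ix x < 28 := by decide +kernel
lemma ix_surj : ∀ n < 28, ∃ x, ix x = n := by decide +kernel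
lemma ix_inj : ∀ x y, ix x = ix y → x = y := by decide +kernel

def comb : ℕ → List ℕ → ℕ
  | _, [] => 0
  | r, h :: t => (bif r.testBit 0 then h else 0) ||| comb (r / 2) t

def mulL (a b : List ℕ) : List ℕ := a.map (fun r => comb r b)

def relB (a : List ℕ) (x y : Htriads) : Bool := (a.getD (ix x) 0).testBit (ix y)

def relOf (a : List ℕ) : MRel := fun x y => relB a x y = true

lemma comb_spec (b : List ℕ) : ∀ (r z : ℕ), (comb r b).testBit z = true ↔
    ∃ y, r.testBit y = true ∧ (b.getD y 0).testBit z = true := by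
  induction b with
  | nil => intro r z; simp [comb]
  | cons h t ih =>
    intro r z
    rw [comb, Nat.testBit_lor, Bool.or_eq_true, ih]
    constructor
    · rintro (h1 | ⟨y, h1, h2⟩)
      · refine ⟨0, ?_, ?_⟩
        · by_contra hc
          rw [Bool.not_eq_true] at hc
          rw [hc] at h1
          simp at h1
        · cases hr : r.testBit 0 with
          | false => rw [hr] at h1; simp at h1
          | true => rw [hr] at h1; simpa using h1
      · exact ⟨y + 1, by rw [Nat.testBit_succ]; exact h1, by simpa using h2⟩
    · rintro ⟨y, h1, h2⟩
      cases y with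
      | zero => left; rw [h1]; simpa using h2
      | succ y => right; exact ⟨y, by rw [Nat.testBit_succ] at h1; exact h1, by simpa using h2⟩

def WF (a : List ℕ) : Prop := a.length = 28 ∧ ∀ r ∈ a, r < 2 ^ 28

lemma comb_lt (b : List ℕ) (hb : ∀ r ∈ b, r < 2 ^ 28) : ∀ r, comb r b < 2 ^ 28 := by
  induction b with
  | nil => intro r; simp [comb]
  | cons h t ih =>
    intro r
    rw [comb]
    apply Nat.or_lt_two_pow
    · cases r.testBit 0
      · simp
      · simpa using hb h (by simp)
    · exact ih (fun r hr => hb r (by simp [hr])) _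

lemma WF.mul {a b : List ℕ} (ha : WF a) (hb : WF b) : WF (mulL a b) := by
  refine ⟨by simp [mulL, ha.1], ?_⟩
  intro r hr
  simp only [mulL, List.mem_map] at hr
  obtain ⟨s, _, rfl⟩ := hr
  exact comb_lt b hb.2 s

lemma relOf_mul {a b : List ℕ} (ha : WF a) (hb : WF b) :
    relOf a * relOf b = relOf (mulL a b) := by
  funext x z
  apply propext
  have hx : ix x < a.length := by rw [ha.1]; exact ix_lt x
  have key : relOf (mulL a b) x z ↔ ∃ y, (a.getD (ix x) 0).testBit y = true ∧
      (b.getD y 0).testBit (ix z) = true := by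
    rw [← comb_spec]
    simp [relOf, relB, mulL, List.getD_eq_getElem?_getD, hx]
  rw [key]
  constructor
  · rintro ⟨y, h1, h2⟩
    exact ⟨ix y, h1, h2⟩
  · rintro ⟨y, h1, h2⟩
    have hy : y < 28 := by
      by_contra hc
      rw [List.getD_eq_default _ _ (by rw [hb.1]; omega)] at h2
      simp at h2
    obtain ⟨w, rfl⟩ := ix_surj y hy
    exact ⟨w, h1, h2⟩

lemma relOf_inj {a b : List ℕ} (ha : WF a) (hb : WF b) (h : relOf a = relOf b) : a = b := by
  apply List.ext_getElem (by rw [ha.1, hb.1])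
  intro n h1 h2
  apply Nat.eq_of_testBit_eq
  intro i
  by_cases hi : i < 28
  · obtain ⟨x, hx⟩ := ix_surj n (by rw [← ha.1]; exact h1)
    obtain ⟨y, rfl⟩ := ix_surj i hi
    have := congrFun (congrFun h x) y
    simp only [relOf, relB, eq_iff_iff, hx] at this
    rw [List.getD_eq_getElem _ _ h1, List.getD_eq_getElem _ _ h2] at this
    exact Bool.eq_iff_iff.2 this
  · have hp : 2 ^ 28 ≤ 2 ^ i := Nat.pow_le_pow_right (by norm_num) (by omega)
    rw [Nat.testBit_lt_two_pow (lt_of_lt_of_le (ha.2 _ (List.getElem_mem h1)) hp),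
      Nat.testBit_lt_two_pow (lt_of_lt_of_le (hb.2 _ (List.getElem_mem h2)) hp)]

def oneL : List ℕ := (List.range 28).map (fun i => 2 ^ i)
def augL : List ℕ := (List.range 4).map (fun i => 2 ^ (24 + i))
def uL : List ℕ := (List.range 12).map (fun i => 2 ^ (24 + i % 4)) ++
  (List.range 12).map (fun i => 2 ^ (24 + (i + 3) % 4)) ++
  (List.range 4).map (fun i => 273 * 2 ^ i + 273 * 2 ^ (12 + (i + 1) % 4))
def pL : List ℕ := (List.range 12).map (fun i => 2 ^ (12 + i)) ++
  (List.range 12).map (fun i => 2 ^ i) ++ augL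
def lL : List ℕ := (List.range 12).map (fun i => 2 ^ (12 + (i + 4) % 12)) ++
  (List.range 12).map (fun i => 2 ^ ((i + 8) % 12)) ++ augL

instance : DecidableRel Urel := fun x y => by unfold Urel; infer_instance
instance : DecidableRel Prel := fun x y => by unfold Prel; infer_instance
instance : DecidableRel Lrel := fun x y => by unfold Lrel; infer_instance

lemma urel_eq : Urel = relOf uL := by
  have h : ∀ x y, (Urel x y ↔ relB uL x y = true) := by decide +kernel
  funext x y
  exact propext (h x y)
lemma prel_eq : Prel = relOf pL := by
  have h : ∀ x y, (Prel x y ↔ relB pL x y = true) := by decide +kernel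
  funext x y
  exact propext (h x y)
lemma lrel_eq : Lrel = relOf lL := by
  have h : ∀ x y, (Lrel x y ↔ relB lL x y = true) := by decide +kernel
  funext x y
  exact propext (h x y)
lemma one_eq : (1 : MRel) = relOf oneL := by
  have h : ∀ x y : Htriads, (x = y ↔ relB oneL x y = true) := by decide +kernel
  funext x y
  exact propext (h x y)

instance (a : List ℕ) : Decidable (WF a) := by unfold WF; infer_instance
lemma wf_u : WF uL := by decide +kernel
lemma wf_p : WF pL := by decide +kernel
lemma wf_l : WF lL := by decide +kernel
lemma wf_one : WF oneL := by decide +kernel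

/-- The normal forms of the elements (`0, 1, 2` stand for `U, P, L`). -/
def words : List (List ℕ) :=
  [[], [0], [1], [2], [0,0], [0,1], [1,0], [1,2], [2,1], [0,0,1], [0,1,0], [1,0,0], [1,0,1],
   [1,2,1], [0,0,1,0], [0,1,0,0], [0,1,0,1], [1,0,0,1], [1,0,1,0], [0,0,1,0,0], [0,0,1,0,1],
   [0,1,0,0,1], [0,1,0,1,0], [1,0,0,1,0], [1,0,1,0,0], [1,0,1,0,1], [0,0,1,0,0,1],
   [0,0,1,0,1,0], [0,1,0,0,1,0], [0,1,0,1,0,1], [1,0,0,1,0,1], [1,0,1,0,0,1], [1,0,1,0,1,0],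
   [0,0,1,0,1,0,1], [0,1,0,0,1,0,1], [0,1,0,1,0,1,0], [1,0,1,0,0,1,0], [1,0,1,0,1,0,1],
   [0,1,0,1,0,1,0,1], [1,0,1,0,0,1,0,1]]

def gen : ℕ → List ℕ
  | 0 => uL
  | 1 => pL
  | _ => lL

def elems : List (List ℕ) := words.map (fun w => w.foldl (fun a g => mulL a (gen g)) oneL)

lemma elems_wf : ∀ a ∈ elems, WF a := by decide +kernel
lemma elems_closed : ∀ a ∈ elems, mulL a uL ∈ elems ∧ mulL a pL ∈ elems ∧ mulL a lL ∈ elems := by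
  decide +kernel

abbrev C : Submonoid MRel := Submonoid.closure ({Urel, Prel, Lrel} : Set MRel)

lemma u_mem : Urel ∈ C := Submonoid.subset_closure (by simp)
lemma p_mem : Prel ∈ C := Submonoid.subset_closure (by simp)
lemma l_mem : Lrel ∈ C := Submonoid.subset_closure (by simp)

lemma mem_elems {c : MRel} (hc : c ∈ C) : ∃ a ∈ elems, c = relOf a := by
  induction hc using Submonoid.closure_induction_right with
  | one => exact ⟨oneL, by decide +kernel, one_eq⟩
  | mul_right x hx y hy ih =>
    obtain ⟨a, ha, rfl⟩ := ih
    have hw := elems_wf a ha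
    obtain ⟨h0, h1, h2⟩ := elems_closed a ha
    rcases hy with rfl | rfl | rfl
    · exact ⟨_, h0, by rw [urel_eq, relOf_mul hw wf_u]⟩
    · exact ⟨_, h1, by rw [prel_eq, relOf_mul hw wf_p]⟩
    · exact ⟨_, h2, by rw [lrel_eq, relOf_mul hw wf_l]⟩

def qL : List ℕ := mulL (mulL pL lL) pL
def vL : List ℕ := mulL (mulL pL uL) pL

lemma p_class : ∀ p ∈ elems, mulL p p = oneL → p ≠ oneL → p ∈ [pL, lL, qL] := by
  decide +kernel

lemma u_class : ∀ p ∈ [pL, lL, qL], ∀ u ∈ elems, mulL (mulL u u) u = u → mulL u u ≠ u →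
    mulL (mulL (mulL u u) p) u ≠ mulL (mulL (mulL (mulL (mulL p u) p) u) u) p →
    u ∈ [uL, vL] := by
  decide +kernel

abbrev G : Type := DihedralGroup 3 × Multiplicative (ZMod 2)

def tw (e : ZMod 2) (n : ZMod 12) : ZMod 12 := if e = 0 then n else 7 * n
def tw4 (e : ZMod 2) (k : ZMod 4) : ZMod 4 := if e = 0 then k else 3 - k

def act : G → Htriads → Htriads
  | (DihedralGroup.r i, e), Sum.inl n => Sum.inl (tw e.toAdd n + 4 * (i.val : ZMod 12))
  | (DihedralGroup.r i, e), Sum.inr (Sum.inl n) =>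
      Sum.inr (Sum.inl (tw e.toAdd n - 4 * (i.val : ZMod 12)))
  | (DihedralGroup.sr i, e), Sum.inl n =>
      Sum.inr (Sum.inl (tw e.toAdd n + 4 * (i.val : ZMod 12)))
  | (DihedralGroup.sr i, e), Sum.inr (Sum.inl n) =>
      Sum.inl (tw e.toAdd n - 4 * (i.val : ZMod 12))
  | (_, e), Sum.inr (Sum.inr k) => Sum.inr (Sum.inr (tw4 e.toAdd k))

instance : Fintype (DihedralGroup 3) := inferInstance
instance : DecidableEq G := inferInstance
instance : Fintype G := inferInstanceAs (Fintype (DihedralGroup 3 × ZMod 2))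

lemma act_one : ∀ x, act 1 x = x := by decide +kernel
lemma act_mul : ∀ (g h : G) (x), act (g * h) x = act g (act h x) := by decide +kernel

lemma act_inv_left (g : G) (x) : act g⁻¹ (act g x) = x := by
  rw [← act_mul, inv_mul_cancel, act_one]
lemma act_inv_right (g : G) (x) : act g (act g⁻¹ x) = x := by
  rw [← act_mul, mul_inv_cancel, act_one]

def cj (g : G) (r : MRel) : MRel := fun x y => r (act g⁻¹ x) (act g⁻¹ y)

lemma cj_one (r : MRel) : cj 1 r = r := by
  funext x y; simp [cj, act_one]
lemma cj_cj (g h : G) (r : MRel) : cj g (cj h r) = cj (g * h) r := by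
  funext x y; simp [cj, act_mul]
lemma cj_map_mul (g : G) (r s : MRel) : cj g (r * s) = cj g r * cj g s := by
  funext x z
  apply propext
  constructor
  · rintro ⟨y, h1, h2⟩
    refine ⟨act g y, ?_, ?_⟩ <;> simpa [cj, act_inv_left]
  · rintro ⟨y, h1, h2⟩
    exact ⟨act g⁻¹ y, h1, h2⟩
lemma cj_map_one (g : G) : cj g 1 = 1 := by
  funext x y
  apply propext
  constructor
  · intro h
    have h' : act g⁻¹ x = act g⁻¹ y := h
    have := congrArg (act g) h'
    rw [act_inv_right, act_inv_right] at this
    exact this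
  · rintro rfl
    exact rfl

def eqv (g : G) (a b : List ℕ) : Bool :=
  decide (∀ x y : Htriads, relB a (act g⁻¹ x) (act g⁻¹ y) = relB b x y)

lemma cj_of_eqv {g : G} {a b : List ℕ} (h : eqv g a b = true) : cj g (relOf a) = relOf b := by
  funext x y
  have := of_decide_eq_true h x y
  simp only [cj, relOf, this]

lemma eqv_of_cj {g : G} {a b : List ℕ} (h : cj g (relOf a) = relOf b) : eqv g a b = true := by
  apply decide_eq_true
  intro x y
  have := congrFun (congrFun h x) y
  simp only [cj, relOf, eq_iff_iff] at this
  exact Bool.eq_iff_iff.2 this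

lemma gens_image : ∀ g : G, (∃ b ∈ [pL, lL, qL], eqv g pL b = true) ∧
    (∃ b ∈ [pL, lL, qL], eqv g lL b = true) ∧ (∃ b ∈ [uL, vL], eqv g uL b = true) := by
  decide +kernel

lemma gens_faithful : ∀ g : G, eqv g pL pL = true → eqv g lL lL = true → eqv g uL uL = true →
    g = 1 := by decide +kernel

lemma gens_onto : ∀ p ∈ [pL, lL, qL], ∀ l ∈ [pL, lL, qL], p ≠ l → ∀ u ∈ [uL, vL],
    ∃ g : G, eqv g pL p = true ∧ eqv g lL l = true ∧ eqv g uL u = true := by decide +kernel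

lemma pl_mem : ∀ b ∈ [pL, lL, qL], relOf b ∈ C := by
  intro b hb
  simp only [List.mem_cons, List.not_mem_nil, or_false] at hb
  rcases hb with rfl | rfl | rfl
  · rw [← prel_eq]; exact p_mem
  · rw [← lrel_eq]; exact l_mem
  · rw [qL, ← relOf_mul (wf_p.mul wf_l) wf_p, ← relOf_mul wf_p wf_l, ← prel_eq, ← lrel_eq]
    exact mul_mem (mul_mem p_mem l_mem) p_mem

lemma uv_mem : ∀ b ∈ [uL, vL], relOf b ∈ C := by
  intro b hb
  simp only [List.mem_cons, List.not_mem_nil, or_false] at hb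
  rcases hb with rfl | rfl
  · rw [← urel_eq]; exact u_mem
  · rw [vL, ← relOf_mul (wf_p.mul wf_u) wf_p, ← relOf_mul wf_p wf_u, ← prel_eq, ← urel_eq]
    exact mul_mem (mul_mem p_mem u_mem) p_mem

lemma cj_mem (g : G) {c : MRel} (hc : c ∈ C) : cj g c ∈ C := by
  obtain ⟨⟨b1, hb1, h1⟩, ⟨b2, hb2, h2⟩, ⟨b3, hb3, h3⟩⟩ := gens_image g
  induction hc using Submonoid.closure_induction with
  | mem x hx =>
    rcases hx with rfl | rfl | rfl
    · rw [urel_eq, cj_of_eqv h3]; exact uv_mem _ hb3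
    · rw [prel_eq, cj_of_eqv h1]; exact pl_mem _ hb1
    · rw [lrel_eq, cj_of_eqv h2]; exact pl_mem _ hb2
  | one => rw [cj_map_one]; exact one_mem _
  | mul x y _ _ hx hy => rw [cj_map_mul]; exact mul_mem hx hy

def Phi : G →* MulAut C where
  toFun g :=
    { toFun := fun c => ⟨cj g c.1, cj_mem g c.2⟩
      invFun := fun c => ⟨cj g⁻¹ c.1, cj_mem g⁻¹ c.2⟩
      left_inv := fun c => Subtype.ext (by simp [cj_cj, cj_one])
      right_inv := fun c => Subtype.ext (by simp [cj_cj, cj_one])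
      map_mul' := fun c d => Subtype.ext (cj_map_mul g c.1 d.1) }
  map_one' := by
    ext1 c
    exact Subtype.ext (cj_one c.1)
  map_mul' g h := by
    ext1 c
    exact Subtype.ext (cj_cj g h c.1).symm

lemma Phi_apply (g : G) (c : C) : (Phi g c).1 = cj g c.1 := rfl

def uC : C := ⟨Urel, u_mem⟩
def pC : C := ⟨Prel, p_mem⟩
def lC : C := ⟨Lrel, l_mem⟩

lemma aut_ext {f g : MulAut C} (hu : f uC = g uC) (hp : f pC = g pC) (hl : f lC = g lC) :
    f = g := by
  ext1 ⟨c, hc⟩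
  induction hc using Submonoid.closure_induction with
  | mem x hx =>
    rcases hx with rfl | rfl | rfl
    · exact hu
    · exact hp
    · exact hl
  | one => exact (map_one f).trans (map_one g).symm
  | mul x y hx hy h1 h2 =>
    have e : (⟨x * y, mul_mem hx hy⟩ : C) = ⟨x, hx⟩ * ⟨y, hy⟩ := rfl
    rw [e, map_mul, map_mul, h1, h2]

lemma Phi_inj : Function.Injective Phi := by
  rw [injective_iff_map_eq_one]
  intro g hg
  have h : ∀ c ∈ C, cj g c = c := fun c hc => by
    rw [← Phi_apply g ⟨c, hc⟩, hg]; rfl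
  apply gens_faithful
  · apply eqv_of_cj; rw [← prel_eq]; exact h _ p_mem
  · apply eqv_of_cj; rw [← lrel_eq]; exact h _ l_mem
  · apply eqv_of_cj; rw [← urel_eq]; exact h _ u_mem

lemma coe_eq {c d : C} {a b : List ℕ} (hc : c.1 = relOf a) (hd : d.1 = relOf b) (ha : WF a)
    (hb : WF b) : c = d ↔ a = b := by
  constructor
  · rintro rfl
    exact relOf_inj ha hb (hc.symm.trans hd)
  · rintro rfl
    exact Subtype.ext (hc.trans hd.symm)

lemma coe_mul {c d : C} {a b : List ℕ} (hc : c.1 = relOf a) (hd : d.1 = relOf b) (ha : WF a)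
    (hb : WF b) : (c * d).1 = relOf (mulL a b) := by
  rw [← relOf_mul ha hb, ← hc, ← hd]; rfl

lemma invol_class (f : MulAut C) {c : C} {a : List ℕ} (hca : c.1 = relOf a) (ha : WF a)
    (h1 : mulL a a = oneL) (h2 : a ≠ oneL) : ∃ b ∈ [pL, lL, qL], (f c).1 = relOf b := by
  obtain ⟨b, hb, hfb⟩ := mem_elems (f c).2
  have hw := elems_wf b hb
  refine ⟨b, p_class b hb ?_ ?_, hfb⟩
  · rw [← coe_eq (coe_mul hfb hfb hw hw) (d := 1) one_eq (hw.mul hw) wf_one, ← map_mul,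
      map_eq_one_iff f f.injective]
    exact (coe_eq (coe_mul hca hca ha ha) one_eq (ha.mul ha) wf_one).2 h1
  · rw [Ne, ← coe_eq hfb (d := 1) one_eq hw wf_one, map_eq_one_iff f f.injective,
      coe_eq hca (d := 1) one_eq ha wf_one]
    exact h2

lemma Phi_surj : Function.Surjective Phi := by
  intro f
  obtain ⟨p, hp, hfp⟩ := invol_class f (c := pC) prel_eq wf_p (by decide +kernel)
    (by decide +kernel)
  obtain ⟨l, hl, hfl⟩ := invol_class f (c := lC) lrel_eq wf_l (by decide +kernel)
    (by decide +kernel)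
  have hwq : ∀ b ∈ [pL, lL, qL], WF b := by decide +kernel
  have wp := hwq p hp
  have wl := hwq l hl
  have hpl : p ≠ l := by
    rw [Ne, ← coe_eq hfp hfl wp wl, f.injective.eq_iff,
      coe_eq (c := pC) (d := lC) prel_eq lrel_eq wf_p wf_l]
    decide +kernel
  obtain ⟨u, hu, hfu⟩ := mem_elems (f uC).2
  have wu := elems_wf u hu
  have hu' : u ∈ [uL, vL] := by
    have a2 := coe_mul hfu hfu wu wu
    have w2 := wu.mul wu
    have b2 := coe_mul (c := uC) (d := uC) urel_eq urel_eq wf_u wf_u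
    have v2 := wf_u.mul wf_u
    refine u_class p hp u hu ?_ ?_ ?_
    · rw [← coe_eq (coe_mul a2 hfu w2 wu) hfu (w2.mul wu) wu, ← map_mul, ← map_mul,
        f.injective.eq_iff,
        coe_eq (coe_mul b2 (d := uC) urel_eq v2 wf_u) (d := uC) urel_eq (v2.mul wf_u) wf_u]
      decide +kernel
    · rw [Ne, ← coe_eq a2 hfu w2 wu, ← map_mul, f.injective.eq_iff,
        coe_eq b2 (d := uC) urel_eq v2 wf_u]
      decide +kernel
    · have a4 := coe_mul (coe_mul a2 hfp w2 wp) hfu (w2.mul wp) wu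
      have w4 := (w2.mul wp).mul wu
      have b4 := coe_mul (coe_mul b2 (d := pC) prel_eq v2 wf_p) (d := uC) urel_eq
        (v2.mul wf_p) wf_u
      have v4 := (v2.mul wf_p).mul wf_u
      have x2 := coe_mul hfp hfu wp wu
      have y2 := wp.mul wu
      have x3 := coe_mul x2 hfp y2 wp
      have y3 := y2.mul wp
      have x4 := coe_mul x3 hfu y3 wu
      have y4 := y3.mul wu
      have x5 := coe_mul x4 hfu y4 wu
      have y5 := y4.mul wu
      have x6 := coe_mul x5 hfp y5 wp
      have y6 := y5.mul wp
      have s2 := coe_mul (c := pC) (d := uC) prel_eq urel_eq wf_p wf_u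
      have t2 := wf_p.mul wf_u
      have s3 := coe_mul s2 (d := pC) prel_eq t2 wf_p
      have t3 := t2.mul wf_p
      have s4 := coe_mul s3 (d := uC) urel_eq t3 wf_u
      have t4 := t3.mul wf_u
      have s5 := coe_mul s4 (d := uC) urel_eq t4 wf_u
      have t5 := t4.mul wf_u
      have s6 := coe_mul s5 (d := pC) prel_eq t5 wf_p
      have t6 := t5.mul wf_p
      rw [Ne, ← coe_eq a4 x6 w4 y6]
      simp only [← map_mul]
      rw [f.injective.eq_iff, coe_eq b4 s6 v4 t6]
      decide +kernel
  obtain ⟨g, g1, g2, g3⟩ := gens_onto p hp l hl hpl u hu'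
  refine ⟨g, aut_ext ?_ ?_ ?_⟩ <;> apply Subtype.ext <;> rw [Phi_apply]
  · rw [hfu, ← cj_of_eqv g3, ← urel_eq]; rfl
  · rw [hfp, ← cj_of_eqv g1, ← prel_eq]; rfl
  · rw [hfl, ← cj_of_eqv g2, ← lrel_eq]; rfl

end UPL

/-- the group of monoid automorphisms of `M_UPL` is isomorphic to
`DihedralGroup 3 × ℤ/2`. -/
theorem stmt8 :
    Nonempty (MulAut (Submonoid.closure ({Urel, Prel, Lrel} : Set MRel)) ≃*
      DihedralGroup 3 × Multiplicative (ZMod 2)) :=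
  ⟨(MulEquiv.ofBijective UPL.Phi ⟨UPL.Phi_inj, UPL.Phi_surj⟩).symm⟩
end

section
/- Let M_UPL be the submonoid of binary relations on the 28-element set H of major, minor, and augmented triads generated by the parsimonious relations U, P, L. Every monoid automorphism N of M_UPL satisfying N(L) = L and N(P) = P satisfies either N(U) = U or N(U) = P·U·P. -/
/-- The submonoid `M_UPL` of relations on `Htriads` generated by `{U, P, L}`. -/
def MUPL : Submonoid MRel := Submonoid.closure {Urel, Prel, Lrel}

lemma Urel_mem : Urel ∈ MUPL := Submonoid.subset_closure (Set.mem_insert _ _)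
lemma Prel_mem : Prel ∈ MUPL :=
  Submonoid.subset_closure (Set.mem_insert_of_mem _ (Set.mem_insert _ _))
lemma Lrel_mem : Lrel ∈ MUPL :=
  Submonoid.subset_closure (Set.mem_insert_of_mem _ (Set.mem_insert_of_mem _ rfl))

def zWords : List (List ℕ) := [[], [0], [1], [2], [0,0], [0,1], [1,0], [1,2], [2,1], [0,0,1], [0,1,0], [1,0,0], [1,0,1], [1,2,1], [0,0,1,0], [0,1,0,0], [0,1,0,1], [1,0,0,1], [1,0,1,0], [0,0,1,0,0], [0,0,1,0,1], [0,1,0,0,1], [0,1,0,1,0], [1,0,0,1,0], [1,0,1,0,0], [1,0,1,0,1], [0,0,1,0,0,1], [0,0,1,0,1,0], [0,1,0,0,1,0], [0,1,0,1,0,1], [1,0,0,1,0,1], [1,0,1,0,0,1], [1,0,1,0,1,0], [0,0,1,0,1,0,1], [0,1,0,0,1,0,1], [0,1,0,1,0,1,0], [1,0,1,0,0,1,0], [1,0,1,0,1,0,1], [0,1,0,1,0,1,0,1], [1,0,1,0,0,1,0,1]]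
def zU : List ℕ := [16777216, 33554432, 67108864, 134217728, 16777216, 33554432, 67108864, 134217728, 16777216, 33554432, 67108864, 134217728, 134217728, 16777216, 33554432, 67108864, 134217728, 16777216, 33554432, 67108864, 134217728, 16777216, 33554432, 67108864, 2236689, 4473378, 8946756, 1120392]
def zP : List ℕ := [4096, 8192, 16384, 32768, 65536, 131072, 262144, 524288, 1048576, 2097152, 4194304, 8388608, 1, 2, 4, 8, 16, 32, 64, 128, 256, 512, 1024, 2048, 16777216, 33554432, 67108864, 134217728]
def zL : List ℕ := [65536, 131072, 262144, 524288, 1048576, 2097152, 4194304, 8388608, 4096, 8192, 16384, 32768, 256, 512, 1024, 2048, 1, 2, 4, 8, 16, 32, 64, 128, 16777216, 33554432, 67108864, 134217728]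
def zI : List ℕ := [1, 2, 4, 8, 16, 32, 64, 128, 256, 512, 1024, 2048, 4096, 8192, 16384, 32768, 65536, 131072, 262144, 524288, 1048576, 2097152, 4194304, 8388608, 16777216, 33554432, 67108864, 134217728]

def zRow : List ℕ → ℕ → ℕ
  | [], _ => 0
  | a :: t, x => bif x.testBit 0 then a ||| zRow t (x / 2) else zRow t (x / 2)

def zMul (r s : List ℕ) : List ℕ := r.map (zRow s)

def zGen (u : List ℕ) : ℕ → List ℕ
  | 0 => u
  | 1 => zP
  | _ => zL

def zEv (u : List ℕ) (w : List ℕ) : List ℕ := w.foldl (fun r g => zMul r (zGen u g)) zI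

def zW : List (List ℕ) := zWords.map (zEv zU)

def zIdx : Htriads → ℕ
  | Sum.inl n => n.val
  | Sum.inr (Sum.inl n) => 12 + n.val
  | Sum.inr (Sum.inr k) => 24 + k.val

def zRel (r : List ℕ) : MRel := fun x y => (r.getD (zIdx x) 0).testBit (zIdx y) = true

def zOK (r : List ℕ) : Prop := r.length = 28 ∧ ∀ a ∈ r, a < 2 ^ 28

lemma zIdx_lt : ∀ x, zIdx x < 28 := by decide +kernel

lemma zIdx_surj : ∀ i : Fin 28, ∃ x, zIdx x = i := by decide +kernel

lemma zRow_testBit (s : List ℕ) (x j : ℕ) :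
    (zRow s x).testBit j = true ↔
      ∃ i, i < s.length ∧ x.testBit i = true ∧ (s.getD i 0).testBit j = true := by
  induction s generalizing x with
  | nil => simp [zRow]
  | cons a t ih =>
    have key : (∃ i, i < (a :: t).length ∧ x.testBit i = true ∧
        ((a :: t).getD i 0).testBit j = true) ↔
        (x.testBit 0 = true ∧ a.testBit j = true) ∨ (zRow t (x / 2)).testBit j = true := by
      rw [ih]
      constructor
      · rintro ⟨i, h1, h2, h3⟩
        cases i with
        | zero => left; exact ⟨h2, by simpa using h3⟩
        | succ i =>
          right
          refine ⟨i, by simpa using h1, ?_, by simpa using h3⟩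
          rwa [← Nat.testBit_succ]
      · rintro (⟨h1, h2⟩ | ⟨i, h1, h2, h3⟩)
        · exact ⟨0, by simp, h1, by simpa using h2⟩
        · exact ⟨i + 1, by simpa using h1, by rwa [Nat.testBit_succ], by simpa using h3⟩
    rw [key, zRow]
    cases h : x.testBit 0
    · simp
    · simp [Nat.testBit_lor]

lemma zRel_mul (r s : List ℕ) (hs : s.length = 28) :
    zRel (zMul r s) = zRel r * zRel s := by
  funext x z
  apply propext
  change _ ↔ ∃ y, zRel r x y ∧ zRel s y z
  have h0 : (zMul r s).getD (zIdx x) 0 = zRow s (r.getD (zIdx x) 0) := by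
    have hz : zRow s 0 = 0 := by
      clear hs
      induction s with
      | nil => rfl
      | cons a t ih => simp [zRow, ih]
    unfold zMul
    conv_lhs => rw [← hz]
    rw [List.getD_map]
  unfold zRel
  rw [h0, zRow_testBit]
  constructor
  · rintro ⟨i, h1, h2, h3⟩
    obtain ⟨y, hy⟩ := zIdx_surj ⟨i, hs ▸ h1⟩
    simp only at hy
    exact ⟨y, by rwa [hy], by rwa [hy]⟩
  · rintro ⟨y, h2, h3⟩
    exact ⟨zIdx y, by rw [hs]; exact zIdx_lt y, h2, h3⟩

lemma zRow_lt (s : List ℕ) (hs : ∀ a ∈ s, a < 2 ^ 28) (x : ℕ) : zRow s x < 2 ^ 28 := by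
  induction s generalizing x with
  | nil => simp [zRow]
  | cons a t ih =>
    have h1 := ih (fun b hb => hs b (List.mem_cons_of_mem _ hb)) (x / 2)
    rw [zRow]
    cases x.testBit 0
    · exact h1
    · exact Nat.or_lt_two_pow (hs a List.mem_cons_self) h1

lemma zOK_mul {r s : List ℕ} (hr : zOK r) (hs : zOK s) : zOK (zMul r s) := by
  refine ⟨by simp [zMul, hr.1], ?_⟩
  intro a ha
  obtain ⟨b, _, rfl⟩ := List.mem_map.1 ha
  exact zRow_lt s hs.2 b

lemma zRel_inj {r s : List ℕ} (hr : zOK r) (hs : zOK s) (h : zRel r = zRel s) : r = s := by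
  apply List.ext_getElem (hr.1.trans hs.1.symm)
  intro i h1 h2
  apply Nat.eq_of_testBit_eq
  intro j
  obtain ⟨x, hx⟩ := zIdx_surj ⟨i, hr.1 ▸ h1⟩
  simp only at hx
  by_cases hj : j < 28
  · obtain ⟨y, hy⟩ := zIdx_surj ⟨j, hj⟩
    simp only at hy
    have := congrFun (congrFun h x) y
    unfold zRel at this
    rw [hx, hy, List.getD_eq_getElem _ _ h1, List.getD_eq_getElem _ _ h2] at this
    exact Bool.eq_iff_iff.2 (iff_of_eq this)
  · have hp : 2 ^ 28 ≤ 2 ^ j := Nat.pow_le_pow_right (by norm_num) (by omega)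
    rw [Nat.testBit_lt_two_pow (lt_of_lt_of_le (hr.2 _ (List.getElem_mem h1)) hp),
      Nat.testBit_lt_two_pow (lt_of_lt_of_le (hs.2 _ (List.getElem_mem h2)) hp)]

lemma zOK_U : zOK zU := by unfold zOK; decide +kernel
lemma zOK_P : zOK zP := by unfold zOK; decide +kernel
lemma zOK_L : zOK zL := by unfold zOK; decide +kernel
lemma zOK_I : zOK zI := by unfold zOK; decide +kernel

set_option synthInstance.maxHeartbeats 400000 in
set_option synthInstance.maxSize 1024 in
instance zDecU (x y : Htriads) : Decidable (Urel x y) := by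
  unfold Urel
  infer_instance

lemma zRel_U : zRel zU = Urel := by
  have h : ∀ x y, zRel zU x y ↔ Urel x y := by unfold zRel; decide +kernel
  funext x y; exact propext (h x y)
lemma zRel_P : zRel zP = Prel := by
  have h : ∀ x y, zRel zP x y ↔ Prel x y := by unfold zRel Prel; decide +kernel
  funext x y; exact propext (h x y)
lemma zRel_L : zRel zL = Lrel := by
  have h : ∀ x y, zRel zL x y ↔ Lrel x y := by unfold zRel Lrel; decide +kernel
  funext x y; exact propext (h x y)
lemma zRel_I : zRel zI = 1 := by
  have h : ∀ x y, zRel zI x y ↔ x = y := by unfold zRel; decide +kernel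
  funext x y; exact propext (h x y)

lemma zW_closed : ∀ w ∈ zW, zMul w zU ∈ zW ∧ zMul w zP ∈ zW ∧ zMul w zL ∈ zW := by
  decide +kernel

lemma zI_mem : zI ∈ zW := by decide +kernel

lemma zOK_gen {u : List ℕ} (hu : zOK u) (g : ℕ) : zOK (zGen u g) := by
  unfold zGen; split
  exacts [hu, zOK_P, zOK_L]

lemma zOK_foldl {u : List ℕ} (hu : zOK u) (w : List ℕ) : ∀ r, zOK r →
    zOK (w.foldl (fun r g => zMul r (zGen u g)) r) := by
  induction w with
  | nil => intro r hr; exact hr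
  | cons g t ih => intro r hr; exact ih _ (zOK_mul hr (zOK_gen hu g))

lemma zOK_ev {u : List ℕ} (hu : zOK u) (w : List ℕ) : zOK (zEv u w) :=
  zOK_foldl hu w _ zOK_I

lemma zOK_W {w : List ℕ} (h : w ∈ zW) : zOK w := by
  obtain ⟨b, _, rfl⟩ := List.mem_map.1 h
  exact zOK_ev zOK_U b

lemma zMem (x : MRel) (hx : x ∈ MUPL) : ∃ w ∈ zW, zRel w = x := by
  unfold MUPL at hx
  induction hx using Submonoid.closure_induction_right with
  | one => exact ⟨zI, zI_mem, zRel_I⟩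
  | mul_right x hx y hy ih =>
    obtain ⟨w, hw, rfl⟩ := ih
    obtain ⟨h1, h2, h3⟩ := zW_closed w hw
    rcases hy with rfl | rfl | rfl
    · exact ⟨_, h1, by rw [zRel_mul _ _ zOK_U.1, zRel_U]⟩
    · exact ⟨_, h2, by rw [zRel_mul _ _ zOK_P.1, zRel_P]⟩
    · exact ⟨_, h3, by rw [zRel_mul _ _ zOK_L.1, zRel_L]⟩

/-- generic evaluation of words -/
def zGenM {M : Type} (u p l : M) : ℕ → M
  | 0 => u
  | 1 => p
  | _ => l

lemma zRel_ev {u : List ℕ} (hu : zOK u) (w : List ℕ) :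
    zRel (zEv u w) = (w.map (zGenM (zRel u) Prel Lrel)).prod := by
  have : ∀ r, zRel (w.foldl (fun r g => zMul r (zGen u g)) r) =
      zRel r * (w.map (zGenM (zRel u) Prel Lrel)).prod := by
    induction w with
    | nil => intro r; simp
    | cons g t ih =>
      intro r
      rw [List.foldl_cons, ih, zRel_mul _ _ (zOK_gen hu g).1, List.map_cons, List.prod_cons,
        mul_assoc]
      congr 2
      unfold zGen zGenM
      split
      exacts [rfl, zRel_P, zRel_L]
  unfold zEv
  rw [this, zRel_I, one_mul]

/-- (in)equations holding for `U` -/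
lemma zFinal : ∀ w ∈ zW,
    (zEv w [0,0,0] = zEv w [0]) → (zEv w [1,0] = zEv w [2,0]) → (zEv w [0,1] = zEv w [0,2]) →
    (zEv w [0,0] ≠ zEv w [0]) →
    (zEv w [0,1,0] ≠ zEv w [0,0,1,0,0]) → (zEv w [0] ≠ zEv w [0,1,0,0,1]) →
    (zEv w [1,0,1] ≠ zEv w [0]) → (zEv w [0] ≠ zEv w [0,1,0]) →
    w = zU ∨ w = zMul (zMul zP zU) zP := by
  decide +kernel

lemma zFacts :
    (zEv zU [0,0,0] = zEv zU [0]) ∧ (zEv zU [1,0] = zEv zU [2,0]) ∧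
    (zEv zU [0,1] = zEv zU [0,2]) ∧
    (zEv zU [0,0] ≠ zEv zU [0]) ∧
    (zEv zU [0,1,0] ≠ zEv zU [0,0,1,0,0]) ∧ (zEv zU [0] ≠ zEv zU [0,1,0,0,1]) ∧
    (zEv zU [1,0,1] ≠ zEv zU [0]) ∧ (zEv zU [0] ≠ zEv zU [0,1,0]) := by
  decide +kernel

theorem stmt9 (N : MulAut MUPL)
    (hL : N ⟨Lrel, Lrel_mem⟩ = ⟨Lrel, Lrel_mem⟩)
    (hP : N ⟨Prel, Prel_mem⟩ = ⟨Prel, Prel_mem⟩) :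
    (N ⟨Urel, Urel_mem⟩ : MRel) = Urel ∨
    (N ⟨Urel, Urel_mem⟩ : MRel) = Prel * Urel * Prel := by
  obtain ⟨w, hw, hwU⟩ := zMem _ (N ⟨Urel, Urel_mem⟩).2
  have hok := zOK_W hw
  let pr : List ℕ → MUPL := fun a =>
    (a.map (zGenM (⟨Urel, Urel_mem⟩ : MUPL) ⟨Prel, Prel_mem⟩ ⟨Lrel, Lrel_mem⟩)).prod
  have hU' : ∀ a, zRel (zEv zU a) = (pr a : MRel) := by
    intro a
    rw [zRel_ev zOK_U, zRel_U]
    change _ = MUPL.subtype (pr a)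
    rw [map_list_prod, List.map_map]
    congr 2
    funext g
    simp only [Function.comp]
    unfold zGenM
    split <;> rfl
  have hN' : ∀ a, zRel (zEv w a) = (N (pr a) : MRel) := by
    intro a
    rw [zRel_ev hok, hwU]
    change _ = MUPL.subtype (N (pr a))
    rw [map_list_prod N, map_list_prod, List.map_map, List.map_map]
    congr 2
    funext g
    simp only [Function.comp]
    unfold zGenM
    split
    · rfl
    · rw [hP]; rfl
    · rw [hL]; rfl
  have key : ∀ a b, zEv w a = zEv w b ↔ zEv zU a = zEv zU b := by
    intro a b
    constructor
    · intro h
      apply zRel_inj (zOK_ev zOK_U a) (zOK_ev zOK_U b)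
      rw [hU', hU']
      have h2 := congrArg zRel h
      rw [hN', hN'] at h2
      exact congrArg Subtype.val (N.injective (Subtype.ext h2))
    · intro h
      apply zRel_inj (zOK_ev hok a) (zOK_ev hok b)
      rw [hN', hN']
      have h2 := congrArg zRel h
      rw [hU', hU'] at h2
      rw [Subtype.ext h2]
  obtain ⟨f1, f2, f3, f4, f5, f6, f7, f8⟩ := zFacts
  rw [← hwU]
  rcases zFinal w hw ((key _ _).2 f1) ((key _ _).2 f2) ((key _ _).2 f3)
    (fun h => f4 ((key _ _).1 h)) (fun h => f5 ((key _ _).1 h)) (fun h => f6 ((key _ _).1 h))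
    (fun h => f7 ((key _ _).1 h)) (fun h => f8 ((key _ _).1 h)) with h | h
  · left; rw [h, zRel_U]
  · right; rw [h, zRel_mul _ _ zOK_P.1, zRel_mul _ _ zOK_U.1, zRel_U, zRel_P]
end

section
/- Let S be Douthett's parsimonious relation P_{1,0} on the 28-element set H of major, minor, and augmented triads. In the monoid of binary relations on H under relational composition, S⁷ = S⁵. -/
instance decEqHt : DecidableEq Htriads := inferInstanceAs (DecidableEq ((ZMod 12) ⊕ (ZMod 12) ⊕ (ZMod 4)))

instance fintypeHt : Fintype Htriads := inferInstanceAs (Fintype ((ZMod 12) ⊕ (ZMod 12) ⊕ (ZMod 4)))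

def nbS : Htriads → List Htriads
  | Sum.inl n => [mino n, mino (n + 4), aug (m4 n)]
  | Sum.inr (Sum.inl n) => [maj n, maj (n + 8), aug (m4 (n + 3))]
  | Sum.inr (Sum.inr k) =>
    [maj (k.val : ZMod 12), maj (k.val + 4 : ZMod 12), maj (k.val + 8 : ZMod 12),
     mino (k.val + 1 : ZMod 12), mino (k.val + 5 : ZMod 12), mino (k.val + 9 : ZMod 12)]

def parS : Htriads → Bool
  | Sum.inl n => n.val % 2 == 1
  | Sum.inr (Sum.inl n) => n.val % 2 == 0
  | Sum.inr (Sum.inr k) => k.val % 2 == 0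

theorem Srel_symm {x y : Htriads} (h : Srel x y) : Srel y x := by
  rcases h with ⟨n, rfl, rfl⟩ | ⟨n, rfl, rfl⟩ | ⟨n, rfl, rfl⟩ | ⟨n, rfl, rfl⟩ | ⟨n, rfl, rfl⟩ |
    ⟨n, rfl, rfl⟩ | ⟨n, rfl, rfl⟩ | ⟨n, rfl, rfl⟩ <;> simp only [Srel]
  · exact .inr (.inl ⟨n, rfl, rfl⟩)
  · exact .inl ⟨n, rfl, rfl⟩
  · exact .inr (.inr (.inr (.inl ⟨n, rfl, rfl⟩)))
  · exact .inr (.inr (.inl ⟨n, rfl, rfl⟩))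
  · exact .inr (.inr (.inr (.inr (.inr (.inl ⟨n, rfl, rfl⟩)))))
  · exact .inr (.inr (.inr (.inr (.inl ⟨n, rfl, rfl⟩))))
  · exact .inr (.inr (.inr (.inr (.inr (.inr (.inr ⟨n, rfl, rfl⟩))))))
  · exact .inr (.inr (.inr (.inr (.inr (.inr (.inl ⟨n, rfl, rfl⟩))))))

theorem Srel_par {x y : Htriads} (h : Srel x y) : parS y = !parS x := by
  rcases h with ⟨n, rfl, rfl⟩ | ⟨n, rfl, rfl⟩ | ⟨n, rfl, rfl⟩ | ⟨n, rfl, rfl⟩ | ⟨n, rfl, rfl⟩ |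
    ⟨n, rfl, rfl⟩ | ⟨n, rfl, rfl⟩ | ⟨n, rfl, rfl⟩ <;> revert n <;> decide

set_option maxRecDepth 100000 in
theorem Srel_of_nb : ∀ x : Htriads, ∀ y ∈ nbS x, Srel x y := by
  unfold Srel
  decide +kernel

set_option maxRecDepth 100000 in
theorem path5_bool : ∀ x z : Htriads, parS z = (!parS x) →
    ((nbS x).any fun a => (nbS a).any fun b => (nbS z).any fun d => (nbS d).any fun c =>
      (nbS b).any fun c' => decide (c' = c)) = true := by
  decide +kernel

theorem path5 (x z : Htriads) (h : parS z = (!parS x)) :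
    ∃ a ∈ nbS x, ∃ b ∈ nbS a, ∃ d ∈ nbS z, ∃ c ∈ nbS d, c ∈ nbS b := by
  have := path5_bool x z h
  simp only [List.any_eq_true, decide_eq_true_eq] at this
  obtain ⟨a, ha, b, hb, d, hd, c, hc, c1, hc1, rfl⟩ := this
  exact ⟨a, ha, b, hb, d, hd, c1, hc, hc1⟩

theorem S5_of_par {x z : Htriads} (h : parS z = !parS x) : (Srel ^ 5) x z := by
  obtain ⟨a, ha, b, hb, d, hd, c, hc, hbc⟩ := path5 x z h
  have e : Srel ^ 5 = Srel * (Srel * (Srel * (Srel * Srel))) := by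
    simp only [pow_succ, pow_zero, one_mul, mul_assoc]
  rw [e]
  exact ⟨a, Srel_of_nb _ _ ha, b, Srel_of_nb _ _ hb, c, Srel_of_nb _ _ hbc, d,
    Srel_symm (Srel_of_nb _ _ hc), Srel_symm (Srel_of_nb _ _ hd)⟩

/-- `S⁷ = S⁵` in the monoid of relations on `Htriads`. -/
theorem stmt11 : Srel ^ 7 = Srel ^ 5 := by
  have e : Srel ^ 5 = Srel ^ 4 * Srel := pow_succ _ _
  have e7 : Srel ^ 7 = Srel ^ 4 * (Srel * (Srel * Srel)) := by
    rw [show 7 = 4 + 3 from rfl, pow_add]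
    simp only [pow_succ, pow_zero, one_mul, mul_assoc]
  have e7' : Srel ^ 7 = Srel * (Srel * (Srel * (Srel * (Srel * (Srel * Srel))))) := by
    simp only [pow_succ, pow_zero, one_mul, mul_assoc]
  funext x z
  apply propext
  constructor
  · intro h
    rw [e7'] at h
    obtain ⟨a, h1, b, h2, c, h3, d, h4, f, h5, g, h6, h7⟩ := h
    apply S5_of_par
    rw [Srel_par h7, Srel_par h6, Srel_par h5, Srel_par h4, Srel_par h3, Srel_par h2,
      Srel_par h1]
    simp
  · intro h
    rw [e] at h
    obtain ⟨y, h1, h2⟩ := h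
    rw [e7]
    exact ⟨y, h1, z, h2, y, Srel_symm h2, h2⟩
end

section
/- Let S be Douthett's parsimonious relation P_{1,0} on the 28-element set H of major, minor, and augmented triads. The submonoid of the monoid of binary relations on H generated by S has exactly 7 elements; equivalently, the relations 1, S, S², S³, S⁴, S⁵, S⁶ are pairwise distinct and S⁷ = S⁵. -/
def tbl0 : Nat := 50872912943267814907988324468550451855464618548137281785011950474227679893986696114649032073875737281066883718329642473153775566684172462771350087899150639340200284097138210625579542079333834954767815137022001033162709953494767730950145
def tbl1 : Nat := 424665259329409253848433091447061454756860068756950079606230065284287997632496105058191561615321592642837226650582189191624037781464985087548128814372318516142280012617645177046949396559311183979607695910362437904621770388693674168320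
def tbl2 : Nat := 54263715939108621280900090276515929347200487070428933485822039028626105118711480450943045259870227941257486761776543583572943810121756832065159336207933565244525267801144571404212667910596455893496033623497321865788736721878962508275985
def tbl3 : Nat := 32220236026543389548265946957375736826475568520010435920606232958331112671760389334184576856448781930021355667156743673930108012739031267983621377529603211364424113675868197058922302453195933897667204091301406880515118113513351427463850
def tbl4 : Nat := 55111804722833713750950572559489541040107376317982752857077355457630207843438387766163881697148425549295176052593205231833682463525107019584494455245612460631498787080583337895508232591253613651033754499037039531974312072763702113902865
def tbl5 : Nat := 33915792738368592634097593274168585674328185709729578914510941911705857027801484762139863918775439872957850877195256364625321476892968737206388027091836031173569085738457686477395290162192462541937971693315073205191162495968656286374570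
def tbl6 : Nat := 67830032958650668139825926481709981786987096308030250193097972452369418207452910860440583482218735706005313041771925649014339192878139738751304783765262815965334075570044732932746895596959973138130464221844329290867351115443032881276245

def tidx : Htriads → Nat
  | Sum.inl n => n.val
  | Sum.inr (Sum.inl n) => 12 + n.val
  | Sum.inr (Sum.inr k) => 24 + k.val

def tdec (i : Nat) : Htriads :=
  if i < 12 then Sum.inl (i : ZMod 12)
  else if i < 24 then Sum.inr (Sum.inl ((i - 12 : Nat) : ZMod 12))
  else Sum.inr (Sum.inr ((i - 24 : Nat) : ZMod 4))

def tbit (L i j : Nat) : Bool := Nat.testBit L (28 * i + j)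

def trel (L : Nat) : MRel := fun x y => tbit L (tidx x) (tidx y) = true

theorem tidx_lt : ∀ x, tidx x < 28 := by decide +kernel
theorem tidx_tdec : ∀ i, i < 28 → tidx (tdec i) = i := by decide +kernel

theorem trel_one : (1 : MRel) = trel tbl0 := by
  funext x y
  apply propext
  change x = y ↔ _
  revert x y
  unfold trel
  decide +kernel

set_option synthInstance.maxHeartbeats 400000 in
set_option synthInstance.maxSize 2000 in
theorem trel_S : Srel = trel tbl1 := by
  funext x y
  apply propext
  revert x y
  unfold trel Srel
  decide +kernel

def tcheck (A B C : Nat) : Prop :=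
  ∀ i, i < 28 → ∀ k, k < 28 → ((List.range 28).any fun j => tbit A i j && tbit B j k) = tbit C i k

theorem trel_mul {A B C : Nat} (h : tcheck A B C) : trel A * trel B = trel C := by
  funext x z
  apply propext
  change (∃ y, trel A x y ∧ trel B y z) ↔ _
  unfold trel
  rw [← h _ (tidx_lt x) _ (tidx_lt z)]
  simp only [List.any_eq_true, List.mem_range, Bool.and_eq_true]
  constructor
  · rintro ⟨y, h⟩
    exact ⟨tidx y, tidx_lt y, h⟩
  · rintro ⟨j, hj, h⟩
    exact ⟨tdec j, by rwa [tidx_tdec j hj]⟩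

theorem trel_ne {A B : Nat} (i j : Nat) (hi : i < 28) (hj : j < 28) (h : tbit A i j ≠ tbit B i j) :
    trel A ≠ trel B := by
  intro e
  have h1 := congrFun (congrFun e (tdec i)) (tdec j)
  unfold trel at h1
  rw [tidx_tdec i hi, tidx_tdec j hj] at h1
  exact h (Bool.eq_iff_iff.mpr (iff_of_eq h1))

theorem tpow1 : Srel ^ 1 = trel tbl1 := by rw [pow_one, trel_S]
theorem tpow2 : Srel ^ 2 = trel tbl2 := by
  rw [pow_succ, tpow1, trel_S]
  exact trel_mul (by unfold tcheck; decide +kernel)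
theorem tpow3 : Srel ^ 3 = trel tbl3 := by
  rw [pow_succ, tpow2, trel_S]
  exact trel_mul (by unfold tcheck; decide +kernel)
theorem tpow4 : Srel ^ 4 = trel tbl4 := by
  rw [pow_succ, tpow3, trel_S]
  exact trel_mul (by unfold tcheck; decide +kernel)
theorem tpow5 : Srel ^ 5 = trel tbl5 := by
  rw [pow_succ, tpow4, trel_S]
  exact trel_mul (by unfold tcheck; decide +kernel)
theorem tpow6 : Srel ^ 6 = trel tbl6 := by
  rw [pow_succ, tpow5, trel_S]
  exact trel_mul (by unfold tcheck; decide +kernel)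
theorem tpow7 : Srel ^ 7 = trel tbl5 := by
  rw [pow_succ, tpow6, trel_S]
  exact trel_mul (by unfold tcheck; decide +kernel)

theorem tpair :
    ([1, Srel, Srel ^ 2, Srel ^ 3, Srel ^ 4, Srel ^ 5, Srel ^ 6] : List MRel).Pairwise (· ≠ ·) := by
  rw [trel_one, tpow2, tpow3, tpow4, tpow5, tpow6, trel_S]
  simp only [List.pairwise_cons, List.mem_cons, List.not_mem_nil, or_false, forall_eq_or_imp,
    forall_eq, List.Pairwise.nil, and_true, false_imp_iff, implies_true]
  refine ⟨⟨?_, ?_, ?_, ?_, ?_, ?_⟩, ⟨?_, ?_, ?_, ?_, ?_⟩, ⟨?_, ?_, ?_, ?_⟩, ⟨?_, ?_, ?_⟩, ⟨?_, ?_⟩, ?_⟩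
  · exact trel_ne 0 0 (by norm_num) (by norm_num) (by decide +kernel)
  · exact trel_ne 0 4 (by norm_num) (by norm_num) (by decide +kernel)
  · exact trel_ne 0 0 (by norm_num) (by norm_num) (by decide +kernel)
  · exact trel_ne 0 4 (by norm_num) (by norm_num) (by decide +kernel)
  · exact trel_ne 0 0 (by norm_num) (by norm_num) (by decide +kernel)
  · exact trel_ne 0 2 (by norm_num) (by norm_num) (by decide +kernel)
  · exact trel_ne 0 0 (by norm_num) (by norm_num) (by decide +kernel)
  · exact trel_ne 0 1 (by norm_num) (by norm_num) (by decide +kernel)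
  · exact trel_ne 0 0 (by norm_num) (by norm_num) (by decide +kernel)
  · exact trel_ne 0 1 (by norm_num) (by norm_num) (by decide +kernel)
  · exact trel_ne 0 0 (by norm_num) (by norm_num) (by decide +kernel)
  · exact trel_ne 0 0 (by norm_num) (by norm_num) (by decide +kernel)
  · exact trel_ne 0 15 (by norm_num) (by norm_num) (by decide +kernel)
  · exact trel_ne 0 0 (by norm_num) (by norm_num) (by decide +kernel)
  · exact trel_ne 0 2 (by norm_num) (by norm_num) (by decide +kernel)
  · exact trel_ne 0 0 (by norm_num) (by norm_num) (by decide +kernel)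
  · exact trel_ne 0 14 (by norm_num) (by norm_num) (by decide +kernel)
  · exact trel_ne 0 0 (by norm_num) (by norm_num) (by decide +kernel)
  · exact trel_ne 0 0 (by norm_num) (by norm_num) (by decide +kernel)
  · exact trel_ne 0 2 (by norm_num) (by norm_num) (by decide +kernel)
  · exact trel_ne 0 0 (by norm_num) (by norm_num) (by decide +kernel)

theorem tred (n : ℕ) : ∃ i : Fin 7, Srel ^ (i : ℕ) = Srel ^ n := by
  induction n using Nat.strong_induction_on with
  | _ n ih =>
    by_cases h : n < 7
    · exact ⟨⟨n, h⟩, rfl⟩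
    · obtain ⟨m, rfl⟩ : ∃ m, n = m + 7 := ⟨n - 7, by omega⟩
      obtain ⟨i, hi⟩ := ih (m + 5) (by omega)
      exact ⟨i, by rw [hi, pow_add, pow_add, tpow7, tpow5]⟩

theorem tcard : Nat.card (Submonoid.closure ({Srel} : Set MRel)) = 7 := by
  have hp := tpair
  rw [← Submonoid.powers_eq_closure]
  have hb : Function.Bijective
      (fun i : Fin 7 => (⟨Srel ^ (i : ℕ), ⟨i, rfl⟩⟩ : Submonoid.powers Srel)) := by
    constructor
    · intro i j hij
      have e : Srel ^ (i : ℕ) = Srel ^ (j : ℕ) := congrArg Subtype.val hij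
      have hl : ([1, Srel, Srel ^ 2, Srel ^ 3, Srel ^ 4, Srel ^ 5, Srel ^ 6] : List MRel)
          = List.ofFn (fun i : Fin 7 => Srel ^ (i : ℕ)) := by
        simp [List.ofFn_succ]
      rw [hl] at hp
      exact List.nodup_ofFn.mp hp e
    · rintro ⟨_, n, rfl⟩
      obtain ⟨i, hi⟩ := tred n
      exact ⟨i, Subtype.ext hi⟩
  rw [← Nat.card_eq_of_bijective _ hb, Nat.card_eq_fintype_card, Fintype.card_fin]

/-- the submonoid generated by `S` has exactly 7 elements; equivalently,
`1, S, S², S³, S⁴, S⁵, S⁶` are pairwise distinct and `S⁷ = S⁵`. -/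
theorem stmt12 :
    Nat.card (Submonoid.closure ({Srel} : Set MRel)) = 7 ∧
    ([1, Srel, Srel ^ 2, Srel ^ 3, Srel ^ 4, Srel ^ 5, Srel ^ 6] : List MRel).Pairwise (· ≠ ·) ∧
    Srel ^ 7 = Srel ^ 5 := ⟨tcard, tpair, tpow7.trans tpow5.symm⟩
end

section
/- Let T be Douthett's parsimonious relation P_{2,0} on the 28-element set H of major, minor, and augmented triads. In the monoid of binary relations on H under relational composition, T⁴ = T³. -/
def tb13 : Htriads → Htriads → Bool
  | .inl a, .inl b => b == a + 4 || b == a + 8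
  | .inl a, .inr (.inl b) => b == a + 1 || b == a + 5
  | .inr (.inl b), .inl a => b == a + 1 || b == a + 5
  | .inl a, .inr (.inr k) => k == m4 (a + 3)
  | .inr (.inr k), .inl a => k == m4 (a + 3)
  | .inr (.inl a), .inr (.inl b) => b == a + 4 || b == a + 8
  | .inr (.inl a), .inr (.inr k) => k == m4 a
  | .inr (.inr k), .inr (.inl a) => k == m4 a
  | .inr (.inr _), .inr (.inr _) => false

def cl13 : Htriads → Bool
  | .inl a => a.val % 2 == 1
  | .inr (.inl a) => a.val % 2 == 0
  | .inr (.inr k) => k.val % 2 == 0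

theorem tb13_sound (x y : Htriads) (h : tb13 x y = true) : Trel x y := by
  rcases x with a | a | a <;> rcases y with b | b | b <;>
    simp only [tb13, Bool.or_eq_true, beq_iff_eq, Bool.false_eq_true] at h <;>
    simp only [Trel, maj, mino, aug, Sum.inl.injEq, Sum.inr.injEq, reduceCtorEq, false_and,
      and_false, exists_false, false_or, or_false, exists_eq_left, exists_eq_left', exists_eq_right, exists_eq_right']
      <;> first | exact h | simpa [eq_comm] using h

theorem cl13_T (x y : Htriads) (h : Trel x y) : cl13 x = cl13 y := by
  rcases h with h|h|h|h|h|h|h|h|h|h|h|h <;> obtain ⟨n, rfl, rfl⟩ := h <;> revert n <;> decide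

set_option maxRecDepth 100000 in
theorem cl13_conv : ∀ x y : Htriads, cl13 x = cl13 y →
    ∃ a, tb13 x a = true ∧ ∃ b, tb13 a b = true ∧ tb13 b y = true := by
  decide +kernel

set_option maxRecDepth 100000 in
theorem nb13 : ∀ x : Htriads, ∃ a, tb13 x a = true := by
  decide +kernel

theorem cube13 (x y : Htriads) : (Trel ^ 3) x y ↔ cl13 x = cl13 y := by
  have e : Trel ^ 3 = Trel * (Trel * Trel) := by rw [pow_succ, pow_two, mul_assoc]
  rw [e]
  constructor
  · rintro ⟨a, h1, b, h2, h3⟩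
    rw [cl13_T _ _ h1, cl13_T _ _ h2, cl13_T _ _ h3]
  · intro h
    obtain ⟨a, h1, b, h2, h3⟩ := cl13_conv x y h
    exact ⟨a, tb13_sound _ _ h1, b, tb13_sound _ _ h2, tb13_sound _ _ h3⟩

/-- `T⁴ = T³` in the monoid of relations on `Htriads`. -/
theorem stmt13 : Trel ^ 4 = Trel ^ 3 := by
  have e : Trel ^ 4 = Trel * Trel ^ 3 := pow_succ' _ _
  funext x y
  apply propext
  rw [e]
  constructor
  · rintro ⟨a, h1, h2⟩
    rw [cube13] at h2 ⊢
    rw [cl13_T _ _ h1, h2]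
  · intro h
    obtain ⟨a, ha⟩ := nb13 x
    have ha := tb13_sound _ _ ha
    refine ⟨a, ha, ?_⟩
    rw [cube13] at h ⊢
    rw [← cl13_T _ _ ha, h]
end

section
/- Let S and T be Douthett's parsimonious relations P_{1,0} and P_{2,0} on the 28-element set H of major, minor, and augmented triads. In the monoid of binary relations on H under relational composition, the following identities hold: T·S = S·T, S³ = S·T, T·S² = T², and S·T³ = S·T² (products written as words in the monoid). -/
/-- Numbering of the triads. -/
def hidx : Htriads → ℕ
  | Sum.inl n => n.val
  | Sum.inr (Sum.inl n) => 12 + n.val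
  | Sum.inr (Sum.inr k) => 24 + k.val

/-- Rows of the adjacency matrix of `S`, as bit masks. -/
def rowS (x : Htriads) : ℕ := ([16846848, 33693696, 67387392, 134774784, 17891328, 35782656, 71565312, 143130624, 17829888, 35659776, 71319552, 142639104, 134217985, 16777730, 33555460, 67110920, 134217745, 16777250, 33554500, 67109000, 134218000, 16777760, 33555520, 67111040, 2236689, 4473378, 8946756, 1120392] : List ℕ).getD (hidx x) 0

/-- Rows of the adjacency matrix of `T`, as bit masks. -/
def rowT (x : Htriads) : ℕ := ([134357264, 17056288, 34112576, 68225152, 136446209, 21234178, 42468356, 68163592, 136323089, 20987938, 41975876, 67178632, 17893504, 35782913, 71565826, 143131652, 17831944, 35659793, 71319586, 142639172, 16846984, 33693968, 67387936, 134775872, 1118754, 2237508, 4475016, 8945937] : List ℕ).getD (hidx x) 0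

/-- All triads. -/
def allH : List Htriads :=
  ([0,1,2,3,4,5,6,7,8,9,10,11] : List (ZMod 12)).map maj ++
  ([0,1,2,3,4,5,6,7,8,9,10,11] : List (ZMod 12)).map mino ++
  ([0,1,2,3] : List (ZMod 4)).map aug

lemma mem_allH : ∀ x : Htriads, x ∈ allH := by
  have h12 : ∀ n : ZMod 12, n ∈ ([0,1,2,3,4,5,6,7,8,9,10,11] : List (ZMod 12)) := by decide
  have h4 : ∀ n : ZMod 4, n ∈ ([0,1,2,3] : List (ZMod 4)) := by decide
  unfold allH
  rintro (n | n | k)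
  · exact List.mem_append_left _ (List.mem_append_left _ (List.mem_map_of_mem (f := maj) (h12 n)))
  · exact List.mem_append_left _ (List.mem_append_right _ (List.mem_map_of_mem (f := mino) (h12 n)))
  · exact List.mem_append_right _ (List.mem_map_of_mem (f := aug) (h4 k))

/-- Bit masks representing a relation. -/
def MaskRep (f : Htriads → ℕ) (R : MRel) : Prop := ∀ x y, R x y ↔ (f x).testBit (hidx y) = true

/-- Union of the masks `g y` over the `y` selected by the mask `a`. -/
def orList (a : ℕ) (g : Htriads → ℕ) (l : List Htriads) : ℕ :=
  l.foldr (fun y acc => bif a.testBit (hidx y) then g y ||| acc else acc) 0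

lemma orList_testBit (a : ℕ) (g : Htriads → ℕ) (l : List Htriads) (i : ℕ) :
    (orList a g l).testBit i = true ↔
      ∃ y ∈ l, a.testBit (hidx y) = true ∧ (g y).testBit i = true := by
  induction l with
  | nil => simp [orList]
  | cons b l ih =>
    have : orList a g (b :: l) =
      bif a.testBit (hidx b) then g b ||| orList a g l else orList a g l := rfl
    rw [this]
    cases h : a.testBit (hidx b)
    · simp [ih, h]
    · simp [ih, h, Nat.testBit_or]

/-- Composition of masks. -/
def compM (f g : Htriads → ℕ) (x : Htriads) : ℕ := orList (f x) g allH

lemma MaskRep.mul {f g : Htriads → ℕ} {R Q : MRel} (hf : MaskRep f R) (hg : MaskRep g Q) :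
    MaskRep (compM f g) (R * Q) := by
  intro x z
  unfold compM
  rw [orList_testBit]
  change (∃ y, R x y ∧ Q y z) ↔ _
  constructor
  · rintro ⟨y, h1, h2⟩
    exact ⟨y, mem_allH y, (hf x y).1 h1, (hg y z).1 h2⟩
  · rintro ⟨y, -, h1, h2⟩
    exact ⟨y, (hf x y).2 h1, (hg y z).2 h2⟩

lemma MaskRep.eq {f g : Htriads → ℕ} {R Q : MRel} (hf : MaskRep f R) (hg : MaskRep g Q)
    (h : ∀ x ∈ allH, f x = g x) : R = Q := by
  funext x y
  apply propext
  rw [hf x y, hg x y, h x (mem_allH x)]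

lemma repS : MaskRep rowS Srel := by
  unfold MaskRep Srel maj mino aug
  rintro (a | a | a) (b | b | b) <;>
    simp only [Sum.inl.injEq, Sum.inr.injEq, reduceCtorEq, false_and, and_false, exists_false,
      or_false, false_or, exists_eq_left', exists_eq_right'] <;>
    revert a b <;> decide +kernel

lemma repT : MaskRep rowT Trel := by
  unfold MaskRep Trel maj mino aug
  rintro (a | a | a) (b | b | b) <;>
    simp only [Sum.inl.injEq, Sum.inr.injEq, reduceCtorEq, false_and, and_false, exists_false,
      or_false, false_or, exists_eq_left', exists_eq_right'] <;>
    revert a b <;> decide +kernel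

/-- `T·S = S·T`, `S³ = S·T`, `T·S² = T²`, and `S·T³ = S·T²`. -/
theorem stmt15 :
    Trel * Srel = Srel * Trel ∧
    Srel ^ 3 = Srel * Trel ∧
    Trel * Srel ^ 2 = Trel ^ 2 ∧
    Srel * Trel ^ 3 = Srel * Trel ^ 2 := by
  have e2 : ∀ R : MRel, R ^ 2 = R * R := fun R => pow_two R
  have e3 : ∀ R : MRel, R ^ 3 = R * (R * R) := fun R => by rw [pow_succ, pow_two, mul_assoc]
  have hSS := repS.mul repS
  have hTT := repT.mul repT
  rw [e3, e3, e2, e2]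
  refine ⟨(repT.mul repS).eq (repS.mul repT) ?_, (repS.mul hSS).eq (repS.mul repT) ?_,
    (repT.mul hSS).eq hTT ?_, (repS.mul (repT.mul hTT)).eq (repS.mul hTT) ?_⟩
  all_goals decide +kernel
end

section
/- Let S and T be Douthett's parsimonious relations P_{1,0} and P_{2,0} on the 28-element set H of major, minor, and augmented triads. The submonoid M_ST of the monoid of binary relations on H generated by {S, T} contains exactly 8 elements. -/
def idxH : Htriads → ℕ
  | Sum.inl n => n.val
  | Sum.inr (Sum.inl n) => 12 + n.val
  | Sum.inr (Sum.inr k) => 24 + k.val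

def relL (l : List ℕ) : MRel := fun x y => (l.getD (idxH x) 0).testBit (idxH y) = true

def rowMul (k : List ℕ) (r : ℕ) : ℕ → ℕ
  | 0 => 0
  | n + 1 => rowMul k r n ||| (bif r.testBit n then k.getD n 0 else 0)

def mulL (l k : List ℕ) : List ℕ := l.map fun r => rowMul k r 28

theorem rowMul_testBit (k : List ℕ) (r n j : ℕ) :
    (rowMul k r n).testBit j = true ↔
      ∃ i, i < n ∧ r.testBit i = true ∧ (k.getD i 0).testBit j = true := by
  induction n with
  | zero => simp [rowMul]
  | succ n ih =>
    rw [rowMul, Nat.testBit_or, Bool.or_eq_true, ih]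
    constructor
    · rintro (⟨i, hi, h⟩ | h)
      · exact ⟨i, by omega, h⟩
      · refine ⟨n, by omega, ?_⟩
        cases hb : r.testBit n <;> simp_all
    · rintro ⟨i, hi, h1, h2⟩
      rcases Nat.lt_succ_iff_lt_or_eq.mp hi with h | rfl
      · exact Or.inl ⟨i, h, h1, h2⟩
      · right
        rw [h1]
        exact h2

theorem idxH_lt : ∀ x : Htriads, idxH x < 28 := by decide +kernel

theorem idxH_surj : ∀ i : Fin 28, ∃ x : Htriads, idxH x = i.val := by decide +kernel

theorem getD_mulL (l k : List ℕ) (i : ℕ) :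
    (mulL l k).getD i 0 = rowMul k (l.getD i 0) 28 := by
  have h0 : rowMul k 0 28 = 0 := by simp [rowMul]
  unfold mulL
  by_cases h : i < l.length
  · simp [List.getD, h]
  · simp [List.getD, h, h0]

theorem relL_mul (l k : List ℕ) : relL l * relL k = relL (mulL l k) := by
  funext x z
  apply propext
  change (∃ y, relL l x y ∧ relL k y z) ↔ ((mulL l k).getD (idxH x) 0).testBit (idxH z) = true
  rw [getD_mulL, rowMul_testBit]
  constructor
  · rintro ⟨y, h1, h2⟩
    exact ⟨idxH y, idxH_lt y, h1, h2⟩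
  · rintro ⟨i, hi, h1, h2⟩
    obtain ⟨y, hy⟩ := idxH_surj ⟨i, hi⟩
    simp only at hy
    subst hy
    exact ⟨y, h1, h2⟩

theorem relL_row {l k : List ℕ} (h : relL l = relL k) (j : Fin 28) :
    (l.getD 0 0).testBit j = (k.getD 0 0).testBit j := by
  obtain ⟨y, hy⟩ := idxH_surj j
  have := congrFun (congrFun h (Sum.inl 0)) y
  have h2 : idxH (Sum.inl 0) = 0 := rfl
  simp only [relL, hy, h2] at this
  exact Bool.eq_iff_iff.mpr (iff_of_eq this)

def oneL : List ℕ := (List.range 28).map (2 ^ ·)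
def sL : List ℕ := [16846848, 33693696, 67387392, 134774784, 17891328, 35782656, 71565312, 143130624, 17829888, 35659776, 71319552, 142639104, 134217985, 16777730, 33555460, 67110920, 134217745, 16777250, 33554500, 67109000, 134218000, 16777760, 33555520, 67111040, 2236689, 4473378, 8946756, 1120392]
def tL : List ℕ := [134357264, 17056288, 34112576, 68225152, 136446209, 21234178, 42468356, 68163592, 136323089, 20987938, 41975876, 67178632, 17893504, 35782913, 71565826, 143131652, 17831944, 35659793, 71319586, 142639172, 16846984, 33693968, 67387936, 134775872, 1118754, 2237508, 4475016, 8945937]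

theorem one_eq : (1 : MRel) = relL oneL := by
  funext x y
  apply propext
  change x = y ↔ (oneL.getD (idxH x) 0).testBit (idxH y) = true
  revert x y
  decide +kernel

theorem S_eq : Srel = relL sL := by
  funext x y
  apply propext
  constructor
  · rintro (⟨n, rfl, rfl⟩ | ⟨n, rfl, rfl⟩ | ⟨n, rfl, rfl⟩ | ⟨n, rfl, rfl⟩ | ⟨n, rfl, rfl⟩ | ⟨n, rfl, rfl⟩ | ⟨n, rfl, rfl⟩ | ⟨n, rfl, rfl⟩) <;> revert n <;> unfold relL <;> decide +kernel
  · rcases x with a | a | a <;> rcases y with b | b | b <;> intro h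
    · have key : ∀ (a : ZMod 12) (b : ZMod 12), relL sL (maj a) (maj b) → False := by
        unfold relL; decide +kernel
      exact (key a b h).elim
    · have key : ∀ (a : ZMod 12) (b : ZMod 12), relL sL (maj a) (mino b) → b = a ∨ b = a + 4 := by
        unfold relL; decide +kernel
      rcases key a b h with rfl | rfl
      · exact Or.inl (⟨_, rfl, rfl⟩)
      · exact Or.inr (Or.inr (Or.inl (⟨_, rfl, rfl⟩)))
    · have key : ∀ (a : ZMod 12) (b : ZMod 4), relL sL (maj a) (aug b) → b = m4 a := by
        unfold relL; decide +kernel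
      rcases key a b h with rfl
      · exact Or.inr (Or.inr (Or.inr (Or.inr (Or.inl (⟨_, rfl, rfl⟩)))))
    · have key : ∀ (a : ZMod 12) (b : ZMod 12), relL sL (mino a) (maj b) → b = a ∨ a = b + 4 := by
        unfold relL; decide +kernel
      rcases key a b h with rfl | rfl
      · exact Or.inr (Or.inl (⟨_, rfl, rfl⟩))
      · exact Or.inr (Or.inr (Or.inr (Or.inl (⟨_, rfl, rfl⟩))))
    · have key : ∀ (a : ZMod 12) (b : ZMod 12), relL sL (mino a) (mino b) → False := by
        unfold relL; decide +kernel
      exact (key a b h).elim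
    · have key : ∀ (a : ZMod 12) (b : ZMod 4), relL sL (mino a) (aug b) → b = m4 (a + 3) := by
        unfold relL; decide +kernel
      rcases key a b h with rfl
      · exact Or.inr (Or.inr (Or.inr (Or.inr (Or.inr (Or.inr (Or.inl (⟨_, rfl, rfl⟩)))))))
    · have key : ∀ (a : ZMod 4) (b : ZMod 12), relL sL (aug a) (maj b) → a = m4 b := by
        unfold relL; decide +kernel
      rcases key a b h with rfl
      · exact Or.inr (Or.inr (Or.inr (Or.inr (Or.inr (Or.inl (⟨_, rfl, rfl⟩))))))
    · have key : ∀ (a : ZMod 4) (b : ZMod 12), relL sL (aug a) (mino b) → a = m4 (b + 3) := by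
        unfold relL; decide +kernel
      rcases key a b h with rfl
      · exact Or.inr (Or.inr (Or.inr (Or.inr (Or.inr (Or.inr (Or.inr (⟨_, rfl, rfl⟩)))))))
    · have key : ∀ (a : ZMod 4) (b : ZMod 4), relL sL (aug a) (aug b) → False := by
        unfold relL; decide +kernel
      exact (key a b h).elim

theorem T_eq : Trel = relL tL := by
  funext x y
  apply propext
  constructor
  · rintro (⟨n, rfl, rfl⟩ | ⟨n, rfl, rfl⟩ | ⟨n, rfl, rfl⟩ | ⟨n, rfl, rfl⟩ | ⟨n, rfl, rfl⟩ | ⟨n, rfl, rfl⟩ | ⟨n, rfl, rfl⟩ | ⟨n, rfl, rfl⟩ | ⟨n, rfl, rfl⟩ | ⟨n, rfl, rfl⟩ | ⟨n, rfl, rfl⟩ | ⟨n, rfl, rfl⟩) <;> revert n <;> unfold relL <;> decide +kernel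
  · rcases x with a | a | a <;> rcases y with b | b | b <;> intro h
    · have key : ∀ (a : ZMod 12) (b : ZMod 12), relL tL (maj a) (maj b) → b = a + 4 ∨ b = a + 8 := by
        unfold relL; decide +kernel
      rcases key a b h with rfl | rfl
      · exact Or.inl (⟨_, rfl, rfl⟩)
      · exact Or.inr (Or.inl (⟨_, rfl, rfl⟩))
    · have key : ∀ (a : ZMod 12) (b : ZMod 12), relL tL (maj a) (mino b) → b = a + 1 ∨ b = a + 5 := by
        unfold relL; decide +kernel
      rcases key a b h with rfl | rfl
      · exact Or.inr (Or.inr (Or.inl (⟨_, rfl, rfl⟩)))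
      · exact Or.inr (Or.inr (Or.inr (Or.inr (Or.inl (⟨_, rfl, rfl⟩)))))
    · have key : ∀ (a : ZMod 12) (b : ZMod 4), relL tL (maj a) (aug b) → b = m4 (a + 3) := by
        unfold relL; decide +kernel
      rcases key a b h with rfl
      · exact Or.inr (Or.inr (Or.inr (Or.inr (Or.inr (Or.inr (Or.inl (⟨_, rfl, rfl⟩)))))))
    · have key : ∀ (a : ZMod 12) (b : ZMod 12), relL tL (mino a) (maj b) → a = b + 1 ∨ a = b + 5 := by
        unfold relL; decide +kernel
      rcases key a b h with rfl | rfl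
      · exact Or.inr (Or.inr (Or.inr (Or.inl (⟨_, rfl, rfl⟩))))
      · exact Or.inr (Or.inr (Or.inr (Or.inr (Or.inr (Or.inl (⟨_, rfl, rfl⟩))))))
    · have key : ∀ (a : ZMod 12) (b : ZMod 12), relL tL (mino a) (mino b) → b = a + 4 ∨ b = a + 8 := by
        unfold relL; decide +kernel
      rcases key a b h with rfl | rfl
      · exact Or.inr (Or.inr (Or.inr (Or.inr (Or.inr (Or.inr (Or.inr (Or.inr (Or.inl (⟨_, rfl, rfl⟩)))))))))
      · exact Or.inr (Or.inr (Or.inr (Or.inr (Or.inr (Or.inr (Or.inr (Or.inr (Or.inr (Or.inl (⟨_, rfl, rfl⟩))))))))))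
    · have key : ∀ (a : ZMod 12) (b : ZMod 4), relL tL (mino a) (aug b) → b = m4 a := by
        unfold relL; decide +kernel
      rcases key a b h with rfl
      · exact Or.inr (Or.inr (Or.inr (Or.inr (Or.inr (Or.inr (Or.inr (Or.inr (Or.inr (Or.inr (Or.inl (⟨_, rfl, rfl⟩)))))))))))
    · have key : ∀ (a : ZMod 4) (b : ZMod 12), relL tL (aug a) (maj b) → a = m4 (b + 3) := by
        unfold relL; decide +kernel
      rcases key a b h with rfl
      · exact Or.inr (Or.inr (Or.inr (Or.inr (Or.inr (Or.inr (Or.inr (Or.inl (⟨_, rfl, rfl⟩))))))))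
    · have key : ∀ (a : ZMod 4) (b : ZMod 12), relL tL (aug a) (mino b) → a = m4 b := by
        unfold relL; decide +kernel
      rcases key a b h with rfl
      · exact Or.inr (Or.inr (Or.inr (Or.inr (Or.inr (Or.inr (Or.inr (Or.inr (Or.inr (Or.inr (Or.inr (⟨_, rfl, rfl⟩)))))))))))
    · have key : ∀ (a : ZMod 4) (b : ZMod 4), relL tL (aug a) (aug b) → False := by
        unfold relL; decide +kernel
      exact (key a b h).elim

def elL : Fin 8 → List ℕ :=
  ![oneL, sL, tL, mulL sL sL, mulL sL tL, mulL tL tL, mulL sL (mulL tL tL), mulL tL (mulL tL tL)]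

theorem elL_mul : ∀ i j : Fin 8, ∃ k : Fin 8, mulL (elL i) (elL j) = elL k := by
  decide +kernel

theorem elL_sep : ∀ i j : Fin 8,
    (∀ b : Fin 28, ((elL i).getD 0 0).testBit b = ((elL j).getD 0 0).testBit b) → i = j := by
  decide +kernel

def subST : Submonoid MRel where
  carrier := Set.range fun i => relL (elL i)
  one_mem' := ⟨0, one_eq.symm⟩
  mul_mem' := by
    rintro _ _ ⟨i, rfl⟩ ⟨j, rfl⟩
    obtain ⟨k, hk⟩ := elL_mul i j
    exact ⟨k, by simp only [relL_mul, hk]⟩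

theorem closure_ST : Submonoid.closure ({Srel, Trel} : Set MRel) = subST := by
  apply le_antisymm
  · rw [Submonoid.closure_le]
    rintro _ (rfl | rfl)
    · exact ⟨1, S_eq.symm⟩
    · exact ⟨2, T_eq.symm⟩
  · have hS : relL sL ∈ Submonoid.closure ({Srel, Trel} : Set MRel) :=
      S_eq ▸ Submonoid.subset_closure (Or.inl rfl)
    have hT : relL tL ∈ Submonoid.closure ({Srel, Trel} : Set MRel) :=
      T_eq ▸ Submonoid.subset_closure (Or.inr rfl)
    have h1 : relL oneL ∈ Submonoid.closure ({Srel, Trel} : Set MRel) :=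
      one_eq ▸ one_mem _
    have hm : ∀ l k, relL l ∈ Submonoid.closure ({Srel, Trel} : Set MRel) →
        relL k ∈ Submonoid.closure ({Srel, Trel} : Set MRel) →
        relL (mulL l k) ∈ Submonoid.closure ({Srel, Trel} : Set MRel) := by
      intro l k hl hk
      rw [← relL_mul]
      exact mul_mem hl hk
    rintro _ ⟨i, rfl⟩
    match i with
    | 0 => exact h1
    | 1 => exact hS
    | 2 => exact hT
    | 3 => exact hm _ _ hS hS
    | 4 => exact hm _ _ hS hT
    | 5 => exact hm _ _ hT hT
    | 6 => exact hm _ _ hS (hm _ _ hT hT)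
    | 7 => exact hm _ _ hT (hm _ _ hT hT)

/-- the submonoid of relations on `Htriads` generated by `{S, T}`
contains exactly 8 elements. -/
theorem stmt16 : Nat.card (Submonoid.closure ({Srel, Trel} : Set MRel)) = 8 := by
  rw [closure_ST]
  change Nat.card (Set.range fun i => relL (elL i)) = 8
  rw [Nat.card_range_of_injective]
  · simp
  · intro i j h
    exact elL_sep i j (relL_row h)
end
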